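/- arXiv:2110.15908 — 3 statements merged into one kernel-verified Lean document; each statement's English description precedes it below -/
import Mathlib

section
/- Let X be a smooth extremal surface of degree q+1 in ℙ³(k). Then Aut(X) acts transitively on the set of pairs (H, L) where H is a star plane of X and L is a line of the star X ∩ H: for any two such pairs (H, L) and (H', L') there exists g ∈ Aut(X) with g(H) = H' and g(L) = L'. In particular, Aut(X) acts transitively on the set of all lines on X. -/
open Module

/-! Basic setup: `k` is an algebraically closed field of characteristic `p > 0`,
`q = p^e`.  We model ℙ³(k) via linear subspaces of `k⁴ = Fin 4 → k`:
points, lines and planes of ℙ³(k) are subspaces of dimension 1, 2 and 3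
respectively.  A hypersurface cut out by a homogeneous form is recorded by its
affine cone in `k⁴`. -/

/-- The Frobenius form in 4 variables determined by a 4×4 matrix `A`:
`∑ i j, A i j * x i ^ q * x j`, a homogeneous form of degree `q+1`. -/
def frobForm {k : Type*} [Field k] (q : ℕ) (A : Matrix (Fin 4) (Fin 4) k)
    (x : Fin 4 → k) : k :=
  ∑ i, ∑ j, A i j * x i ^ q * x j

/-- The affine cone in `k⁴` of the extremal surface in ℙ³(k) cut out by the
Frobenius form with matrix `A`; a point of ℙ³(k) lies on the surface iff its
homogeneous coordinate representatives lie in this set. -/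
def extremalCone (k : Type*) [Field k] (q : ℕ) (A : Matrix (Fin 4) (Fin 4) k) :
    Set (Fin 4 → k) :=
  {x | frobForm q A x = 0}

/-- A point of ℙ³(k): a 1-dimensional subspace of `k⁴`. -/
def IsPoint {k : Type*} [Field k] (c : Submodule k (Fin 4 → k)) : Prop :=
  finrank k c = 1

/-- A line of ℙ³(k): a 2-dimensional subspace of `k⁴`. -/
def IsLine {k : Type*} [Field k] (L : Submodule k (Fin 4 → k)) : Prop :=
  finrank k L = 2

/-- A plane of ℙ³(k): a 3-dimensional subspace of `k⁴`. -/
def IsPlane {k : Type*} [Field k] (H : Submodule k (Fin 4 → k)) : Prop :=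
  finrank k H = 3

/-- `L` is a line lying on the surface with affine cone `X`. -/
def IsLineOn {k : Type*} [Field k] (X : Set (Fin 4 → k))
    (L : Submodule k (Fin 4 → k)) : Prop :=
  IsLine L ∧ (L : Set (Fin 4 → k)) ⊆ X

/-- Two lines of ℙ³(k) meet iff the corresponding subspaces of `k⁴` intersect
nontrivially. -/
def MeetsLine {k : Type*} [Field k] (L M : Submodule k (Fin 4 → k)) : Prop :=
  L ⊓ M ≠ ⊥

/-- Two lines of ℙ³(k) are skew iff the corresponding subspaces of `k⁴`
intersect trivially. -/
def SkewLine {k : Type*} [Field k] (L M : Submodule k (Fin 4 → k)) : Prop :=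
  L ⊓ M = ⊥

/-- `IsStarAt q X S c`: `S` is a star on the surface with affine cone `X`,
centered at the point `c`, i.e. a set of `q+1` distinct lines on the surface
all passing through `c`. -/
def IsStarAt {k : Type*} [Field k] (q : ℕ) (X : Set (Fin 4 → k))
    (S : Set (Submodule k (Fin 4 → k))) (c : Submodule k (Fin 4 → k)) : Prop :=
  IsPoint c ∧ S.ncard = q + 1 ∧ ∀ L ∈ S, IsLineOn X L ∧ c ≤ L

/-- `S` is a star on the surface with affine cone `X`. -/
def IsStar {k : Type*} [Field k] (q : ℕ) (X : Set (Fin 4 → k))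
    (S : Set (Submodule k (Fin 4 → k))) : Prop :=
  ∃ c, IsStarAt q X S c

/-- `c` is a star point of the surface with affine cone `X`. -/
def IsStarPoint {k : Type*} [Field k] (q : ℕ) (X : Set (Fin 4 → k))
    (c : Submodule k (Fin 4 → k)) : Prop :=
  ∃ S, IsStarAt q X S c

/-- `H` is a star plane of the surface with affine cone `X`, centered at `c`:
the plane section `X ∩ H` is the union of a star centered at `c`. -/
def IsStarPlaneAt {k : Type*} [Field k] (q : ℕ) (X : Set (Fin 4 → k))
    (H c : Submodule k (Fin 4 → k)) : Prop :=
  IsPlane H ∧ ∃ S, IsStarAt q X S c ∧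
    X ∩ (H : Set (Fin 4 → k)) = ⋃ L ∈ S, (L : Set (Fin 4 → k))

/-- An element of `Aut(X)`: since every projective linear automorphism of
ℙ³(k) is represented by an invertible linear map of `k⁴` (uniquely up to
scalars, which act trivially on subspaces and preserve every cone), `g ∈
PGL(4,k)` with `g(X) = X` corresponds to a linear automorphism of `k⁴`
mapping the affine cone `X` onto itself. -/
def PreservesCone {k : Type*} [Field k] (X : Set (Fin 4 → k))
    (g : (Fin 4 → k) ≃ₗ[k] (Fin 4 → k)) : Prop :=
  (⇑g) '' X = X

/-! The Frobenius form of `A` is the diagonal of the form `B(x, y) = ∑ Aᵢⱼ xᵢ^q yⱼ`, which is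
sesquilinear for the `q`-power map `σ`, so the isometries of `B` are automorphisms of `X`. Call `v`
Hermitian if `B(y, v) = σ(B(v, y))` for all `y`. The Hermitian vectors are the fixed vectors of an
injective `σ²`-semilinear map, so by Lang's theorem they span every subspace stable under it, in
particular every line on `X` and every star point. A star plane is therefore the kernel of `B(v, -)`
for a Hermitian vector `v` spanning its star point. A Hermitian basis of a line on `X` extends to a
hyperbolic basis of `k⁴`: the Gram matrix of a complement is normalised by solving
`Y + (σ Y)ᵀ = C`, again Lang's theorem. Any two hyperbolic bases differ by an isometry of `B`, which
can thus be chosen to move one pair `(v, L)` to any other. -/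

section PolynomialEquations

open Polynomial

variable {k : Type*} [Field k] {q : ℕ}

theorem surjective_of_eq_pow [IsAlgClosed k] (hq : q ≠ 0) {σ : k →+* k}
    (hσ : ∀ a, σ a = a ^ q) : Function.Surjective σ := fun a => by
  obtain ⟨b, hb⟩ := IsAlgClosed.exists_pow_nat_eq a (Nat.pos_of_ne_zero hq)
  exact ⟨b, by rw [hσ, hb]⟩

/-- The polynomials `Pᵢ` for which `yᵢ = Pᵢ(y)` solves the triangular recursion
`y₀ = a₀ y ^ q`, `yᵢ₊₁ = yᵢ ^ q + aᵢ₊₁ y ^ q`. -/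
noncomputable def companionPoly (q : ℕ) (a : ℕ → k) : ℕ → k[X]
  | 0 => C (a 0) * X ^ q
  | i + 1 => companionPoly q a i ^ q + C (a (i + 1)) * X ^ q

theorem X_pow_dvd_companionPoly (hq : 1 < q) (a : ℕ → k) (n : ℕ) :
    X ^ q ∣ companionPoly q a n := by
  induction n with
  | zero => exact dvd_mul_left _ _
  | succ n ih =>
    exact dvd_add (ih.trans (dvd_pow_self _ (by omega))) (dvd_mul_left _ _)

theorem companionPoly_ne_zero (hq : 1 < q) {a : ℕ → k} {n i : ℕ} (hi : i ≤ n) (ha : a i ≠ 0) :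
    companionPoly q a n ≠ 0 := by
  contrapose! ha with hP
  induction n with
  | zero =>
    obtain rfl : i = 0 := by omega
    simpa [companionPoly] using hP
  | succ n ih =>
    have hdvd : X ^ (q * q) ∣ companionPoly q a n ^ q := by
      rw [pow_mul]
      exact pow_dvd_pow_of_dvd (X_pow_dvd_companionPoly hq a n) q
    have hcoeff : (companionPoly q a n ^ q).coeff q = 0 :=
      X_pow_dvd_iff.1 hdvd q (by nlinarith)
    have ha : a (n + 1) = 0 := by
      simpa [companionPoly, hcoeff] using congrArg (coeff · q) hP
    obtain rfl | hi := hi.eq_or_lt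
    · exact ha
    · exact ih (by omega) (by simpa [companionPoly, ha, show q ≠ 0 by omega] using hP)

theorem exists_ne_zero_eval_eq_self [IsAlgClosed k] {P : k[X]} (hP : P ≠ 0) (hX : X ^ 2 ∣ P) :
    ∃ y : k, y ≠ 0 ∧ P.eval y = y := by
  obtain ⟨S, rfl⟩ := hX
  have hS : S ≠ 0 := right_ne_zero_of_mul hP
  obtain ⟨y, hy⟩ := IsAlgClosed.eval_surjective (p := X * S) (by simp [natDegree_X_mul hS]) 1
  have hy : y * S.eval y = 1 := by simpa using hy
  refine ⟨y, left_ne_zero_of_mul_eq_one hy, ?_⟩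
  simp only [eval_mul, eval_pow, eval_X]
  linear_combination y * hy

theorem exists_companion_solution [IsAlgClosed k] (hq : 1 < q) {a : ℕ → k} {n i : ℕ}
    (hi : i ≤ n) (ha : a i ≠ 0) :
    ∃ y : ℕ → k, y n ≠ 0 ∧ y 0 = a 0 * y n ^ q ∧
      ∀ j, y (j + 1) = y j ^ q + a (j + 1) * y n ^ q := by
  obtain ⟨y, hy, hfix⟩ := exists_ne_zero_eval_eq_self (companionPoly_ne_zero hq hi ha)
    ((pow_dvd_pow _ hq).trans (X_pow_dvd_companionPoly hq a n))
  refine ⟨fun j => (companionPoly q a j).eval y, ?_, ?_, fun j => ?_⟩ <;>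
    simp [hfix, hy, companionPoly]

theorem exists_pow_sub_self_eq [IsAlgClosed k] (hq : 1 < q) (c : k) : ∃ x : k, x ^ q - x = c := by
  have hdeg : (X ^ q - X : k[X]).natDegree = q := by
    rw [natDegree_sub_eq_left_of_natDegree_lt (by simpa using hq), natDegree_X_pow]
  obtain ⟨x, hx⟩ := IsAlgClosed.eval_surjective (p := (X ^ q - X : k[X])) (by omega) c
  exact ⟨x, by simpa using hx⟩

end PolynomialEquations

section Lang

variable {k V : Type*} [Field k] [AddCommGroup V] [Module k V] {q : ℕ}

theorem exists_iterate_mem_span_image_range [FiniteDimensional k V] (f : V → V) (w : V) :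
    ∃ n, f^[n] w ∈ Submodule.span k ((f^[·] w) '' (Finset.range n : Set ℕ)) := by
  let W : ℕ →o Submodule k V :=
    ⟨fun n => Submodule.span k ((f^[·] w) '' (Finset.range n : Set ℕ)), fun m n hmn =>
      Submodule.span_mono (Set.image_mono (by simpa using hmn))⟩
  obtain ⟨n, hn⟩ := monotone_stabilizes_iff_noetherian.2 (inferInstance : IsNoetherian k V) W
  refine ⟨n, ?_⟩
  change _ ∈ W n
  rw [hn (n + 1) n.le_succ]
  exact Submodule.subset_span ⟨n, by simp, rfl⟩

variable {τ : k →+* k} {F : V →ₛₗ[τ] V}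

/- Along a cyclic vector `w` with `Fⁿ⁺¹ w = ∑ aᵢ Fⁱ w`, the equation `F v = v` for
`v = ∑ yᵢ Fⁱ w` is the recursion solved by the companion polynomials. -/
theorem exists_ne_zero_map_eq_self [IsAlgClosed k] [FiniteDimensional k V] [Nontrivial V]
    (hq : 1 < q) (hτ : ∀ a, τ a = a ^ q) (hF : Function.Injective F) :
    ∃ v, v ≠ 0 ∧ F v = v := by
  classical
  obtain ⟨w, hw⟩ := exists_ne (0 : V)
  have hrel := exists_iterate_mem_span_image_range (k := k) F w
  obtain ⟨n, hn⟩ : ∃ n, Nat.find hrel = n + 1 :=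
    Nat.exists_eq_succ_of_ne_zero fun h => hw (by simpa using (Nat.find_eq_zero hrel).1 h)
  have hmin : F^[n] w ∉ Submodule.span k ((F^[·] w) '' (Finset.range n : Set ℕ)) :=
    Nat.find_min hrel (by omega)
  obtain ⟨a, ha⟩ : ∃ a : ℕ → k, ∑ i ∈ Finset.range (n + 1), a i • F^[i] w = F^[n + 1] w := by
    rw [← Submodule.mem_span_image_finset_iff_exists_fun', ← hn]
    exact Nat.find_spec hrel
  obtain ⟨i, hi, hai⟩ : ∃ i ∈ Finset.range (n + 1), a i ≠ 0 := by
    by_contra! h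
    rw [Finset.sum_eq_zero fun i hi => by rw [h i hi, zero_smul]] at ha
    refine hw (hF.iterate (n + 1) ?_)
    rw [← ha, iterate_map_zero]
  obtain ⟨y, hyn, hy0, hy⟩ := exists_companion_solution hq (by simpa [Nat.lt_succ_iff] using hi) hai
  refine ⟨∑ i ∈ Finset.range (n + 1), y i • F^[i] w, fun h => hmin ?_, ?_⟩
  · rw [Finset.sum_range_succ, add_comm, add_eq_zero_iff_eq_neg] at h
    rw [← Submodule.smul_mem_iff _ hyn, h]
    exact neg_mem (Submodule.mem_span_image_finset_iff_exists_fun' k |>.2 ⟨y, rfl⟩)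
  · calc F (∑ i ∈ Finset.range (n + 1), y i • F^[i] w)
        = ∑ i ∈ Finset.range n, y i ^ q • F^[i + 1] w + y n ^ q • F^[n + 1] w := by
          simp only [Finset.sum_range_succ, map_add, map_sum, map_smulₛₗ, hτ,
            Function.iterate_succ_apply']
      _ = ∑ i ∈ Finset.range (n + 1), y i • F^[i] w := by
          rw [← ha, Finset.sum_range_succ', Finset.sum_range_succ' (fun i => y i • _), hy0]
          simp only [hy, add_smul, mul_smul, smul_add, Finset.smul_sum, Finset.sum_add_distrib,
            smul_comm (y n ^ q)]
          abel

theorem exists_mem_span_fixed_map_sub_eq [IsAlgClosed k] (hq : 1 < q) (hτ : ∀ a, τ a = a ^ q)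
    {u : V} (hu : u ∈ Submodule.span k {v | F v = v}) :
    ∃ w ∈ Submodule.span k {v | F v = v}, F w - w = u := by
  induction hu using Submodule.closure_induction with
  | zero => exact ⟨0, zero_mem _, by simp⟩
  | add u₁ u₂ _ _ h₁ h₂ =>
    obtain ⟨w₁, hw₁, rfl⟩ := h₁
    obtain ⟨w₂, hw₂, rfl⟩ := h₂
    exact ⟨w₁ + w₂, add_mem hw₁ hw₂, by rw [map_add]; abel⟩
  | smul_mem c v hv =>
    obtain ⟨t, ht⟩ := exists_pow_sub_self_eq hq c
    refine ⟨t • v, Submodule.smul_mem _ _ (Submodule.subset_span hv), ?_⟩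
    rw [map_smulₛₗ, hτ, hv, ← sub_smul, ht]

theorem map_span_fixed [RingHomSurjective τ] :
    (Submodule.span k {v | F v = v}).map F = Submodule.span k {v | F v = v} := by
  have hfix : Set.EqOn F id {v | F v = v} := fun _ hv => hv
  rw [Submodule.map_span, hfix.image_eq_self]

/-- **Lang's theorem** for the general linear group. -/
theorem span_fixed_eq_top [IsAlgClosed k] [FiniteDimensional k V] (hq : 1 < q)
    (hτ : ∀ a, τ a = a ^ q) (hF : Function.Injective F) :
    Submodule.span k {v | F v = v} = ⊤ := by
  have : RingHomSurjective τ := ⟨surjective_of_eq_pow (by omega) hτ⟩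
  set W := Submodule.span k {v | F v = v} with hW
  by_contra hne
  have : Nontrivial (V ⧸ W) := Submodule.Quotient.nontrivial_iff.2 hne
  have hmem (v : V) : F v ∈ W ↔ v ∈ W := by
    rw [← SetLike.mem_coe, hW, ← map_span_fixed, Submodule.map_coe, hF.mem_set_image,
      map_span_fixed, SetLike.mem_coe]
  have hinj : Function.Injective (W.mapQ W F fun v => (hmem v).2) := by
    rw [injective_iff_map_eq_zero]
    intro v
    induction v using Submodule.Quotient.induction_on with
    | H v => simpa [Submodule.Quotient.mk_eq_zero] using (hmem v).1
  obtain ⟨v, hv, hfix⟩ := exists_ne_zero_map_eq_self hq hτ hinj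
  induction v using Submodule.Quotient.induction_on with
  | H v =>
    rw [Submodule.mapQ_apply, Submodule.Quotient.eq] at hfix
    obtain ⟨w, hw, hvw⟩ := exists_mem_span_fixed_map_sub_eq hq hτ hfix
    have hvw : F (v - w) = v - w := by
      rw [map_sub, sub_eq_sub_iff_sub_eq_sub, hvw]
    exact hv ((Submodule.Quotient.mk_eq_zero W).2
      (by simpa using W.add_mem (Submodule.subset_span hvw) hw))

theorem surjective_map_sub_self [IsAlgClosed k] [FiniteDimensional k V] (hq : 1 < q)
    (hτ : ∀ a, τ a = a ^ q) (hF : Function.Injective F) :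
    Function.Surjective fun v => F v - v := fun u => by
  obtain ⟨w, -, hw⟩ := exists_mem_span_fixed_map_sub_eq hq hτ
    (show u ∈ Submodule.span k {v | F v = v} by simp [span_fixed_eq_top hq hτ hF])
  exact ⟨w, hw⟩

theorem le_span_fixed_of_map_mem [IsAlgClosed k] [FiniteDimensional k V] (hq : 1 < q)
    (hτ : ∀ a, τ a = a ^ q) (hF : Function.Injective F) {W : Submodule k V}
    (hW : ∀ v ∈ W, F v ∈ W) : W ≤ Submodule.span k {v | v ∈ W ∧ F v = v} := by
  let G : W →ₛₗ[τ] W := (F.domRestrict W).codRestrict W fun v => hW v v.2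
  have hG : Function.Injective G := fun v w h => Subtype.ext (hF (congrArg Subtype.val h))
  calc W = (⊤ : Submodule k W).map W.subtype := by simp
    _ = Submodule.span k (W.subtype '' {v | G v = v}) := by
      rw [← span_fixed_eq_top hq hτ hG, Submodule.map_span]
    _ ≤ _ := Submodule.span_mono ?_
  rintro _ ⟨v, hv, rfl⟩
  exact ⟨v.2, congrArg Subtype.val hv⟩

end Lang

theorem exists_linearIndependent_of_mem_of_finrank_span {k V : Type*} [Field k] [AddCommGroup V]
    [Module k V] [FiniteDimensional k V] {S : Set V} {v : V} (hv : v ∈ S) (hv0 : v ≠ 0) {n : ℕ}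
    (hn : finrank k (Submodule.span k S) = n + 1) :
    ∃ a : Fin (n + 1) → V, LinearIndependent k a ∧ (∀ i, a i ∈ S) ∧ a 0 = v := by
  obtain ⟨b, hbS, hvb, hSb, hb⟩ := exists_linearIndepOn_id_extension
    (LinearIndepOn.singleton (R := k) (v := id) hv0) (Set.singleton_subset_iff.2 hv)
  have hspan : Submodule.span k b = Submodule.span k S :=
    (Submodule.span_mono hbS).antisymm (Submodule.span_le.2 hSb)
  have : Fintype b := hb.setFinite.fintype
  have hcard : Nat.card b = n + 1 := by
    rw [Nat.card_eq_card_toFinset, ← finrank_span_set_eq_card hb, hspan, hn]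
  let e := Finite.equivFinOfCardEq hcard
  let f := (Equiv.swap 0 (e ⟨v, hvb rfl⟩)).trans e.symm
  exact ⟨fun i => f i, hb.comp f f.injective, fun i => hbS (f i).2, by simp [f]⟩

section Duality

variable {k V : Type*} [Field k] [AddCommGroup V] [Module k V]
  {σ : k →+* k} {B : V →ₛₗ[σ] V →ₗ[k] k} {ι : Type*}

theorem surjective_pi_of_linearIndependent [Finite ι] {f : ι → Dual k V}
    (hf : LinearIndependent k f) : Function.Surjective (LinearMap.pi f) := by
  have hcoe : LinearIndependent k (fun i => (f i : V → k)) :=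
    hf.map' (LinearMap.ltoFun k V k k) (LinearMap.ker_eq_bot.2 DFunLike.coe_injective)
  rw [← LinearMap.range_eq_top, ← (LinearMap.range (LinearMap.pi f)).span_eq]
  exact span_flip_eq_top_iff_linearIndependent.2 hcoe

theorem orthogonalBilin_span_range (B : V →ₛₗ[σ] V →ₗ[k] k) (a : ι → V) :
    (Submodule.span k (Set.range a)).orthogonalBilin B = LinearMap.ker (.pi fun i => B (a i)) := by
  ext y
  have hflip : (∀ x ∈ Submodule.span k (Set.range a), B x y = 0) ↔
      Submodule.span k (Set.range a) ≤ LinearMap.ker (B.flip y) := Iff.rfl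
  rw [Submodule.mem_orthogonalBilin_iff, hflip, Submodule.span_le, Set.range_subset_iff]
  simp [funext_iff]

theorem surjective_pi_apply (hσ : Function.Surjective σ) (hB : B.SeparatingLeft) [Finite ι]
    {a : ι → V} (ha : LinearIndependent k a) :
    Function.Surjective (LinearMap.pi fun i => B (a i)) :=
  surjective_pi_of_linearIndependent <| ha.map_of_surjective_injective σ B.toAddMonoidHom hσ
    (LinearMap.separatingLeft_iff_linear_nontrivial.1 hB) B.map_smulₛₗ

theorem finrank_add_finrank_orthogonalBilin [FiniteDimensional k V] (hσ : Function.Surjective σ)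
    (hB : B.SeparatingLeft) (W : Submodule k V) :
    finrank k W + finrank k (W.orthogonalBilin B) = finrank k V := by
  let a : Fin (finrank k W) → V := W.subtype ∘ finBasis k W
  have ha : LinearIndependent k a := (finBasis k W).linearIndependent.map' _ W.ker_subtype
  have hspan : Submodule.span k (Set.range a) = W := by
    rw [Set.range_comp, ← Submodule.map_span, Basis.span_eq, Submodule.map_subtype_top]
  have hrank := LinearMap.finrank_range_add_finrank_ker (LinearMap.pi fun i => B (a i))
  rwa [LinearMap.range_eq_top.2 (surjective_pi_apply hσ hB ha), finrank_top, finrank_fin_fun,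
    ← orthogonalBilin_span_range, hspan] at hrank

theorem separatingRight_of_separatingLeft [FiniteDimensional k V] (hσ : Function.Surjective σ)
    (hB : B.SeparatingLeft) : B.SeparatingRight := fun y hy => by
  have hbot : (⊤ : Submodule k V).orthogonalBilin B = ⊥ := by
    have := finrank_add_finrank_orthogonalBilin hσ hB ⊤
    rw [finrank_top] at this
    exact Submodule.finrank_eq_zero.1 (by omega)
  have : y ∈ (⊤ : Submodule k V).orthogonalBilin B := fun x _ => hy x
  simpa [hbot] using this

theorem linearIndependent_of_isUnit_gram [Fintype ι] [DecidableEq ι] {b : ι → V}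
    (hG : IsUnit (Matrix.of fun i j => B (b i) (b j))) : LinearIndependent k b := by
  refine Fintype.linearIndependent_iff.2 fun x hx => congrFun ?_
  refine Matrix.mulVec_injective_of_isUnit hG ?_
  ext i
  simpa [Matrix.mulVec, dotProduct, mul_comm] using congrArg (B (b i)) hx

theorem exists_isometry_of_gram_eq [FiniteDimensional k V] [Fintype ι] [DecidableEq ι]
    (hcard : Fintype.card ι = finrank k V) {b b' : ι → V}
    (hG : IsUnit (Matrix.of fun i j => B (b i) (b j)))
    (h : (Matrix.of fun i j => B (b i) (b j)) = Matrix.of fun i j => B (b' i) (b' j)) :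
    ∃ g : V ≃ₗ[k] V, (∀ x y, B (g x) (g y) = B x y) ∧ ∀ i, g (b i) = b' i := by
  have hb := linearIndependent_of_isUnit_gram hG
  have hb' := linearIndependent_of_isUnit_gram (h ▸ hG)
  let β := Basis.mk hb (hb.span_eq_top_of_card_eq_finrank' hcard).ge
  let β' := Basis.mk hb' (hb'.span_eq_top_of_card_eq_finrank' hcard).ge
  let g := β.equiv β' (Equiv.refl ι)
  have hg (i : ι) : g (b i) = b' i := by
    simpa [β, β', g] using β.equiv_apply i β' (Equiv.refl ι)
  have hB : (B.comp g.toLinearMap).compl₂ g.toLinearMap = B :=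
    LinearMap.ext_basis β β fun i j => by simpa [β, hg] using congr($h.symm i j)
  exact ⟨g, fun x y => congr($hB x y), hg⟩

theorem map_ker_of_isometry {g : V ≃ₗ[k] V} (hg : ∀ x y, B (g x) (g y) = B x y) (v : V) :
    (LinearMap.ker (B v)).map (g : V →ₗ[k] V) = LinearMap.ker (B (g v)) := by
  ext y
  obtain ⟨x, rfl⟩ := g.surjective y
  simp [hg]

end Duality

section Hermitian

variable {k V : Type*} [Field k] [AddCommGroup V] [Module k V]
  {σ : k →+* k} {B : V →ₛₗ[σ] V →ₗ[k] k}

/-- A vector `v` is *Hermitian* for the `σ`-sesquilinear form `B` when `B(-, v)` is the `σ`-twist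
of `B(v, -)`, the condition satisfied by every vector if `B` is an honest Hermitian form. -/
def IsHermitianVector (B : V →ₛₗ[σ] V →ₗ[k] k) (v : V) : Prop :=
  ∀ y, B y v = σ (B v y)

theorem bijective_flip [FiniteDimensional k V] (hσ : Function.Surjective σ)
    (hB : B.SeparatingLeft) : Function.Bijective B.flip := by
  refine ⟨(injective_iff_map_eq_zero _).2 fun y hy =>
    separatingRight_of_separatingLeft hσ hB y fun x => congr($hy x), fun φ => ?_⟩
  let b := finBasis k V
  obtain ⟨y, hy⟩ := surjective_pi_apply hσ hB b.linearIndependent (φ ∘ b)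
  exact ⟨y, b.ext fun i => congrFun hy i⟩

/- The fixed vectors of `F` are the Hermitian vectors of `B`. -/
theorem exists_injective_apply_eq_map_apply [FiniteDimensional k V] (hσ : Function.Surjective σ)
    (hB : B.SeparatingLeft) :
    ∃ F : V →ₛₗ[σ.comp σ] V, Function.Injective F ∧ ∀ x y, B y (F x) = σ (B x y) := by
  let E : V ≃ₗ[k] (V →ₛₗ[σ] k) := LinearEquiv.ofBijective B.flip (bijective_flip hσ hB)
  let twist : V →ₛₗ[σ.comp σ] (V →ₛₗ[σ] k) :=
    { toFun := fun x => σ.toSemilinearMap.comp (B x)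
      map_add' := fun x y => by ext; simp
      map_smul' := fun c x => by ext; simp }
  have hF (x y : V) : B y (E.symm (twist x)) = σ (B x y) :=
    congr($(E.apply_symm_apply (twist x)) y)
  refine ⟨E.symm.toLinearMap.comp twist, (injective_iff_map_eq_zero _).2 fun x hx => hB x ?_, hF⟩
  intro y
  have hx : E.symm (twist x) = 0 := hx
  simpa [hx] using (hF x y).symm

variable [IsAlgClosed k] {q : ℕ}

theorem le_span_isHermitianVector [FiniteDimensional k V] (hq : 1 < q)
    (hσ : ∀ a, σ a = a ^ q) (hB : B.SeparatingLeft) {U W : Submodule k V}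
    (hWU : W ≤ U.orthogonalBilin B) (hUW : U ≤ W.orthogonalBilin B)
    (hdim : finrank k U + finrank k W = finrank k V) :
    W ≤ Submodule.span k {v | v ∈ W ∧ IsHermitianVector B v} := by
  have hσ' := surjective_of_eq_pow (by omega) hσ
  obtain ⟨F, hF, hBF⟩ := exists_injective_apply_eq_map_apply hσ' hB
  have hW : W = U.orthogonalBilin B := Submodule.eq_of_le_of_finrank_eq hWU (by
    have := finrank_add_finrank_orthogonalBilin hσ' hB U
    omega)
  have hFW (v : V) (hv : v ∈ W) : F v ∈ W := by
    rw [hW]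
    intro u hu
    rw [hBF, hUW hu v hv, map_zero]
  have hqq (a : k) : σ.comp σ a = a ^ (q * q) := by simp [hσ, pow_mul]
  refine (le_span_fixed_of_map_mem (by nlinarith) hqq hF hFW).trans (Submodule.span_mono ?_)
  rintro v ⟨hv, hfix⟩
  exact ⟨hv, fun y => by rw [← hBF, hfix]⟩

theorem exists_isHermitianVector_ne_zero [FiniteDimensional k V] (hq : 1 < q)
    (hσ : ∀ a, σ a = a ^ q) (hB : B.SeparatingLeft) {U W : Submodule k V}
    (hWU : W ≤ U.orthogonalBilin B) (hUW : U ≤ W.orthogonalBilin B)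
    (hdim : finrank k U + finrank k W = finrank k V) (hW : W ≠ ⊥) :
    ∃ v ∈ W, v ≠ 0 ∧ IsHermitianVector B v := by
  by_contra! h
  refine hW (eq_bot_iff.2 ((le_span_isHermitianVector hq hσ hB hWU hUW hdim).trans ?_))
  refine Submodule.span_le.2 fun v hv => ?_
  by_contra hv0
  exact h v hv.1 hv0 hv.2

theorem exists_add_transpose_map_eq {ι : Type*} [Finite ι] (hq : 1 < q) (hσ : ∀ a, σ a = a ^ q)
    (C : Matrix ι ι k) : ∃ Y : Matrix ι ι k, Y + (Y.map σ).transpose = C := by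
  let F : Matrix ι ι k →ₛₗ[σ] Matrix ι ι k :=
    { toFun := fun Y => -(Y.map σ).transpose
      map_add' := fun Y Z => by ext; simp [add_comm]
      map_smul' := fun c Y => by ext; simp }
  have hF : Function.Injective F := fun Y Z h => by
    ext i j
    exact σ.injective (neg_injective congr($h j i))
  obtain ⟨Y, hY⟩ := surjective_map_sub_self hq hσ hF (-C)
  have hY : -(Y.map σ).transpose - Y = -C := hY
  exact ⟨Y, by rw [← neg_inj, ← hY]; abel⟩

/-- Linearly independent, mutually orthogonal Hermitian vectors: half of a hyperbolic basis. -/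
structure IsIsotropicFrame {ι : Type*} (B : V →ₛₗ[σ] V →ₗ[k] k) (a : ι → V) : Prop where
  linearIndependent : LinearIndependent k a
  isHermitianVector : ∀ i, IsHermitianVector B (a i)
  orthogonal : ∀ i j, B (a i) (a j) = 0

namespace IsIsotropicFrame

variable {ι : Type*}

/- Adding `∑ Yₗⱼ aₗ` to the `j`-th vector of a dual family changes its Gram matrix by
`Y + (σ Y)ᵀ`, and Lang's theorem makes this an arbitrary matrix. -/
theorem exists_gram_eq_fromBlocks [Finite ι] [DecidableEq ι] {a : ι → V}
    (ha : IsIsotropicFrame B a) (hq : 1 < q) (hσ : ∀ a, σ a = a ^ q) (hB : B.SeparatingLeft) :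
    ∃ c : ι → V, (Matrix.of fun i j => B (Sum.elim a c i) (Sum.elim a c j)) =
      Matrix.fromBlocks 0 1 1 0 := by
  have := Fintype.ofFinite ι
  have hdual (j : ι) : ∃ c, ∀ i, B (a i) c = (1 : Matrix ι ι k) i j := by
    obtain ⟨c, hc⟩ := surjective_pi_apply (surjective_of_eq_pow (by omega) hσ) hB
      ha.linearIndependent fun i => (1 : Matrix ι ι k) i j
    exact ⟨c, congrFun hc⟩
  choose c hac using hdual
  have hca (i j : ι) : B (c i) (a j) = (1 : Matrix ι ι k) i j := by
    obtain rfl | hij := eq_or_ne i j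
    · simp [ha.isHermitianVector i (c i), hac]
    · simp [ha.isHermitianVector j (c i), hac, hij, hij.symm]
  obtain ⟨Y, hY⟩ := exists_add_transpose_map_eq hq hσ (-Matrix.of fun i j => B (c i) (c j))
  have hY (i j : ι) : Y i j + σ (Y j i) = -B (c i) (c j) := congr($hY i j)
  refine ⟨fun j => c j + ∑ l, Y l j • a l, ?_⟩
  ext (i | i) (j | j)
  · simp [ha.orthogonal]
  · simp [ha.orthogonal, hac]
  · simp [ha.orthogonal, hca]
  · simp only [Matrix.of_apply, Sum.elim_inr, map_add, map_sum, LinearMap.map_smulₛₗ,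
      LinearMap.add_apply, map_smul, hca, Matrix.one_apply, smul_eq_mul, mul_ite, mul_one,
      mul_zero, Finset.sum_ite_eq, Finset.mem_univ, ↓reduceIte, LinearMap.coe_sum,
      LinearMap.coe_smul, Finset.sum_apply, Pi.smul_apply, hac, ha.orthogonal,
      Finset.sum_const_zero, add_zero, Finset.sum_ite_eq', Matrix.fromBlocks_apply₂₂,
      Matrix.zero_apply]
    linear_combination hY i j

theorem exists_isometry [FiniteDimensional k V] [Fintype ι] {a a' : ι → V}
    (ha : IsIsotropicFrame B a) (ha' : IsIsotropicFrame B a') (hq : 1 < q)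
    (hσ : ∀ a, σ a = a ^ q) (hB : B.SeparatingLeft) (hcard : 2 * Fintype.card ι = finrank k V) :
    ∃ g : V ≃ₗ[k] V, (∀ x y, B (g x) (g y) = B x y) ∧ ∀ i, g (a i) = a' i := by
  classical
  have hunit : IsUnit (Matrix.fromBlocks 0 1 1 0 : Matrix (ι ⊕ ι) (ι ⊕ ι) k) :=
    IsUnit.of_mul_eq_one (Matrix.fromBlocks 0 1 1 0) (by simp [Matrix.fromBlocks_multiply])
  obtain ⟨c, hc⟩ := ha.exists_gram_eq_fromBlocks hq hσ hB
  obtain ⟨c', hc'⟩ := ha'.exists_gram_eq_fromBlocks hq hσ hB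
  obtain ⟨g, hg, hgb⟩ := exists_isometry_of_gram_eq (by simp [← hcard, two_mul])
    (hc ▸ hunit) (hc.trans hc'.symm)
  exact ⟨g, hg, fun i => hgb (Sum.inl i)⟩

end IsIsotropicFrame

/-- A subspace `L` of half the dimension on which `B` vanishes, together with a nonzero Hermitian
vector `v` of `L`. -/
structure IsHermitianFlag (B : V →ₛₗ[σ] V →ₗ[k] k) (v : V) (L : Submodule k V) : Prop where
  le_orthogonalBilin : L ≤ L.orthogonalBilin B
  two_mul_finrank : 2 * finrank k L = finrank k V
  mem : v ∈ L
  ne_zero : v ≠ 0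
  isHermitianVector : IsHermitianVector B v

namespace IsHermitianFlag

variable [FiniteDimensional k V] {v v' : V} {L L' : Submodule k V}

theorem exists_isIsotropicFrame (h : IsHermitianFlag B v L) (hq : 1 < q)
    (hσ : ∀ a, σ a = a ^ q) (hB : B.SeparatingLeft) {n : ℕ} (hn : finrank k L = n + 1) :
    ∃ a : Fin (n + 1) → V,
      IsIsotropicFrame B a ∧ Submodule.span k (Set.range a) = L ∧ a 0 = v := by
  have hL : Submodule.span k {w | w ∈ L ∧ IsHermitianVector B w} = L := by
    refine (Submodule.span_le.2 fun w hw => hw.1).antisymm ?_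
    exact le_span_isHermitianVector hq hσ hB h.le_orthogonalBilin h.le_orthogonalBilin
      (by rw [← h.two_mul_finrank, two_mul])
  obtain ⟨a, ha, hmem, ha0⟩ := exists_linearIndependent_of_mem_of_finrank_span
    (S := {w | w ∈ L ∧ IsHermitianVector B w}) ⟨h.mem, h.isHermitianVector⟩ h.ne_zero (hL ▸ hn)
  refine ⟨a, ⟨ha, fun i => (hmem i).2, fun i j => ?_⟩, ?_, ha0⟩
  · exact h.le_orthogonalBilin (hmem j).1 _ (hmem i).1
  · refine Submodule.eq_of_le_of_finrank_eq ?_ ?_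
    · exact Submodule.span_le.2 (Set.range_subset_iff.2 fun i => (hmem i).1)
    · rw [finrank_span_eq_card ha, hn, Fintype.card_fin]

theorem exists_isometry (h : IsHermitianFlag B v L) (h' : IsHermitianFlag B v' L') (hq : 1 < q)
    (hσ : ∀ a, σ a = a ^ q) (hB : B.SeparatingLeft) :
    ∃ g : V ≃ₗ[k] V, (∀ x y, B (g x) (g y) = B x y) ∧ g v = v' ∧
      L.map (g : V →ₗ[k] V) = L' := by
  obtain ⟨n, hn⟩ : ∃ n, finrank k L = n + 1 := Nat.exists_eq_succ_of_ne_zero fun h0 =>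
    h.ne_zero (by simpa [Submodule.finrank_eq_zero.1 h0] using h.mem)
  have hn' : finrank k L' = n + 1 := by
    have := h.two_mul_finrank
    have := h'.two_mul_finrank
    omega
  obtain ⟨a, ha, rfl, rfl⟩ := h.exists_isIsotropicFrame hq hσ hB hn
  obtain ⟨a', ha', rfl, rfl⟩ := h'.exists_isIsotropicFrame hq hσ hB hn'
  obtain ⟨g, hg, hga⟩ := ha.exists_isometry ha' hq hσ hB
    (by rw [← h.two_mul_finrank, hn, Fintype.card_fin])
  refine ⟨g, hg, hga 0, ?_⟩
  rw [Submodule.map_span, ← Set.range_comp]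
  congr! 2
  exact funext hga

end IsHermitianFlag

theorem le_orthogonalBilin_self_of_apply_self_eq_zero (hq : 1 < q) (hσ : ∀ a, σ a = a ^ q)
    {L : Submodule k V} (hL : ∀ x ∈ L, B x x = 0) : L ≤ L.orthogonalBilin B := by
  intro y hy x hx
  have hpolar (t : k) : t * B x y + t ^ q * B y x = 0 := by
    have := hL (x + t • y) (add_mem hx (L.smul_mem t hy))
    simpa [hL x hx, hL y hy, hσ] using this
  obtain ⟨t, ht⟩ := exists_pow_sub_self_eq hq (1 : k)
  have hskew := hpolar 1
  rw [one_pow] at hskew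
  linear_combination t ^ q * hskew - hpolar t - B x y * ht

theorem exists_isHermitianVector_sup_eq_ker [FiniteDimensional k V] (hq : 1 < q)
    (hσ : ∀ a, σ a = a ^ q) (hB : B.SeparatingLeft) {L M c : Submodule k V}
    (hL : L ≤ L.orthogonalBilin B) (hM : M ≤ M.orthogonalBilin B) (hcL : c ≤ L) (hcM : c ≤ M)
    (hc : finrank k c = 1) (hdim : finrank k ↥(L ⊔ M) + 1 = finrank k V) :
    ∃ v ∈ c, v ≠ 0 ∧ IsHermitianVector B v ∧ L ⊔ M = LinearMap.ker (B v) := by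
  have hsup : L ⊔ M ≤ c.orthogonalBilin B :=
    sup_le (hL.trans (Submodule.orthogonalBilin_le hcL))
      (hM.trans (Submodule.orthogonalBilin_le hcM))
  have hcsup : c ≤ (L ⊔ M).orthogonalBilin B := fun x hx =>
    show L ⊔ M ≤ LinearMap.ker (B.flip x) from sup_le (hL (hcL hx)) (hM (hcM hx))
  obtain ⟨v, hvc, hv0, hv⟩ := exists_isHermitianVector_ne_zero hq hσ hB hcsup hsup (hc ▸ hdim)
    (by rintro rfl; simp at hc)
  have hBv : B v ≠ 0 := fun h => hv0 (hB v fun y => congr($h y))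
  refine ⟨v, hvc, hv0, hv, Submodule.eq_of_le_of_finrank_eq (fun x hx => hsup hx v hvc) ?_⟩
  exact Nat.succ_injective (hdim.trans (Dual.finrank_ker_add_one_of_ne_zero hBv).symm)

end Hermitian

section Surface

variable {k : Type*} [Field k] {q : ℕ} {σ : k →+* k}

/-- The sesquilinear form `∑ Aᵢⱼ σ(xᵢ) yⱼ`, whose diagonal is the Frobenius form when `σ` is the
`q`-power map. -/
noncomputable def frobSesqForm {n : Type*} [Fintype n] [DecidableEq n] (σ : k →+* k)
    (A : Matrix n n k) : (n → k) →ₛₗ[σ] (n → k) →ₗ[k] k :=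
  A.toLinearMapₛₗ₂' k σ (RingHom.id k)

theorem separatingLeft_frobSesqForm {n : Type*} [Fintype n] [DecidableEq n] {A : Matrix n n k}
    (hA : IsUnit A) : (frobSesqForm σ A).SeparatingLeft := by
  intro x hx
  have hvec : Matrix.vecMul (σ ∘ x) A = 0 := by
    ext j
    simpa [frobSesqForm, Matrix.toLinearMapₛₗ₂'_apply, Matrix.vecMul, dotProduct, Pi.single_apply]
      using hx (Pi.single j 1)
  have hzero : σ ∘ x = 0 := Matrix.vecMul_injective_of_isUnit hA (by simpa using hvec)
  ext i
  simpa using congrFun hzero i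

variable {A : Matrix (Fin 4) (Fin 4) k}

theorem frobSesqForm_self (hσ : ∀ a, σ a = a ^ q) (x : Fin 4 → k) :
    frobSesqForm σ A x x = frobForm q A x := by
  simp only [frobForm, frobSesqForm, Matrix.toLinearMapₛₗ₂'_apply, hσ, RingHom.id_apply,
    smul_eq_mul]
  exact Finset.sum_congr rfl fun i _ => Finset.sum_congr rfl fun j _ => by ring

theorem preservesCone_of_isometry (hσ : ∀ a, σ a = a ^ q) {g : (Fin 4 → k) ≃ₗ[k] (Fin 4 → k)}
    (hg : ∀ x y, frobSesqForm σ A (g x) (g y) = frobSesqForm σ A x y) :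
    PreservesCone (extremalCone k q A) g := by
  ext y
  obtain ⟨x, rfl⟩ := g.surjective y
  rw [g.injective.mem_set_image]
  simp only [extremalCone, Set.mem_ofPred, ← frobSesqForm_self hσ, hg]

variable [IsAlgClosed k] {L H : Submodule k (Fin 4 → k)}

theorem le_orthogonalBilin_of_isLineOn (hq : 1 < q) (hσ : ∀ a, σ a = a ^ q)
    (hL : IsLineOn (extremalCone k q A) L) : L ≤ L.orthogonalBilin (frobSesqForm σ A) :=
  le_orthogonalBilin_self_of_apply_self_eq_zero hq hσ fun x hx =>
    (frobSesqForm_self hσ x).trans (hL.2 hx)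

theorem exists_isHermitianFlag_of_isLineOn (hq : 1 < q) (hσ : ∀ a, σ a = a ^ q) (hA : IsUnit A)
    (hL : IsLineOn (extremalCone k q A) L) : ∃ v, IsHermitianFlag (frobSesqForm σ A) v L := by
  have hiso := le_orthogonalBilin_of_isLineOn hq hσ hL
  have hdim : finrank k L = 2 := hL.1
  obtain ⟨v, hv, hv0, hherm⟩ := exists_isHermitianVector_ne_zero hq hσ
    (separatingLeft_frobSesqForm hA) hiso hiso (by simp [hdim]) (by rintro rfl; simp at hdim)
  exact ⟨v, hiso, by simp [hdim], hv, hv0, hherm⟩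

theorem exists_isHermitianFlag_of_mem_star (hq : 1 < q) (hσ : ∀ a, σ a = a ^ q) (hA : IsUnit A)
    {c : Submodule k (Fin 4 → k)} {S : Set (Submodule k (Fin 4 → k))} (hH : IsPlane H)
    (hS : IsStarAt q (extremalCone k q A) S c)
    (hHS : extremalCone k q A ∩ (H : Set (Fin 4 → k)) = ⋃ M ∈ S, (M : Set (Fin 4 → k)))
    (hL : L ∈ S) :
    ∃ v, IsHermitianFlag (frobSesqForm σ A) v L ∧ H = LinearMap.ker (frobSesqForm σ A v) := by
  obtain ⟨hc, hcard, hlines⟩ := hS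
  obtain ⟨M, hM, hML⟩ := Set.exists_ne_of_one_lt_ncard (show 1 < S.ncard by omega) L
  have hle {N : Submodule k (Fin 4 → k)} (hN : N ∈ S) : N ≤ H :=
    (Set.subset_biUnion_of_mem hN).trans (hHS.ge.trans Set.inter_subset_right)
  have hdim {N : Submodule k (Fin 4 → k)} (hN : N ∈ S) : finrank k N = 2 := (hlines N hN).1.1
  have hsup : L ⊔ M = H := by
    refine Submodule.eq_of_le_of_finrank_le (sup_le (hle hL) (hle hM)) ?_
    have hlt : L < L ⊔ M := left_lt_sup.2 fun h =>
      hML (Submodule.eq_of_le_of_finrank_eq h ((hdim hM).trans (hdim hL).symm))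
    have := Submodule.finrank_lt_finrank_of_lt hlt
    rw [hdim hL] at this
    exact hH.trans_le this
  have hiso {N : Submodule k (Fin 4 → k)} (hN : N ∈ S) :=
    le_orthogonalBilin_of_isLineOn hq hσ (hlines N hN).1
  obtain ⟨v, hvc, hv0, hv, hker⟩ := exists_isHermitianVector_sup_eq_ker hq hσ
    (separatingLeft_frobSesqForm hA) (hiso hL) (hiso hM) (hlines L hL).2 (hlines M hM).2 hc
    (by rw [hsup, show finrank k H = 3 from hH, finrank_fin_fun])
  exact ⟨v, ⟨hiso hL, by simp [hdim hL], (hlines L hL).2 hvc, hv0, hv⟩, hsup.symm.trans hker⟩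

end Surface

/-- `Aut(X)` acts transitively on pairs `(H, L)` of a star
plane `H` and a line `L` of the star `X ∩ H`; in particular it acts
transitively on the lines of `X`.  (An element of `Aut(X) ⊆ PGL(4,k)` is
represented by an invertible linear map `g` of `k⁴` preserving the cone.) -/
theorem aut_transitive_on_star_plane_line_pairs {k : Type*} [Field k] [IsAlgClosed k]
    (p e q : ℕ) (hp : p.Prime) (hchar : CharP k p) (he : 1 ≤ e) (hq : q = p ^ e)
    (A : Matrix (Fin 4) (Fin 4) k) (hA : IsUnit A) :
    (∀ H L H' L' : Submodule k (Fin 4 → k),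
      (∃ c S, IsStarPlaneAt q (extremalCone k q A) H c ∧
          IsStarAt q (extremalCone k q A) S c ∧
          extremalCone k q A ∩ (H : Set (Fin 4 → k)) = ⋃ M ∈ S, (M : Set (Fin 4 → k)) ∧
          L ∈ S) →
      (∃ c' S', IsStarPlaneAt q (extremalCone k q A) H' c' ∧
          IsStarAt q (extremalCone k q A) S' c' ∧
          extremalCone k q A ∩ (H' : Set (Fin 4 → k)) = ⋃ M ∈ S', (M : Set (Fin 4 → k)) ∧
          L' ∈ S') →
      ∃ g : (Fin 4 → k) ≃ₗ[k] (Fin 4 → k),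
        PreservesCone (extremalCone k q A) g ∧
          Submodule.map (g : (Fin 4 → k) →ₗ[k] (Fin 4 → k)) H = H' ∧
          Submodule.map (g : (Fin 4 → k) →ₗ[k] (Fin 4 → k)) L = L') ∧
    (∀ L L' : Submodule k (Fin 4 → k),
      IsLineOn (extremalCone k q A) L → IsLineOn (extremalCone k q A) L' →
        ∃ g : (Fin 4 → k) ≃ₗ[k] (Fin 4 → k),
          PreservesCone (extremalCone k q A) g ∧
            Submodule.map (g : (Fin 4 → k) →ₗ[k] (Fin 4 → k)) L = L') := by
  subst hq
  have := Fact.mk hp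
  have hq : 1 < p ^ e := Nat.one_lt_pow (by omega) hp.one_lt
  have hσ (a : k) : iterateFrobenius k p e a = a ^ p ^ e := iterateFrobenius_def p e a
  have hB := separatingLeft_frobSesqForm (σ := iterateFrobenius k p e) hA
  constructor
  · rintro H L H' L' ⟨c, S, hH, hS, hHS, hL⟩ ⟨c', S', hH', hS', hHS', hL'⟩
    obtain ⟨v, hvL, rfl⟩ := exists_isHermitianFlag_of_mem_star hq hσ hA hH.1 hS hHS hL
    obtain ⟨v', hvL', rfl⟩ := exists_isHermitianFlag_of_mem_star hq hσ hA hH'.1 hS' hHS' hL'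
    obtain ⟨g, hg, rfl, hgL⟩ := hvL.exists_isometry hvL' hq hσ hB
    exact ⟨g, preservesCone_of_isometry hσ hg, map_ker_of_isometry hg v, hgL⟩
  · intro L L' hL hL'
    obtain ⟨v, hvL⟩ := exists_isHermitianFlag_of_isLineOn hq hσ hA hL
    obtain ⟨v', hvL'⟩ := exists_isHermitianFlag_of_isLineOn hq hσ hA hL'
    obtain ⟨g, hg, -, hgL⟩ := hvL.exists_isometry hvL' hq hσ hB
    exact ⟨g, preservesCone_of_isometry hσ hg, hgL⟩
end

section
/- Let X be a smooth extremal surface of degree q+1 in ℙ³(k) and let ℓ be a star chord for X. Then: (1) ℓ meets X in exactly q+1 distinct points, each of which is a star point of X; (2) the stars centered at the points of ℓ ∩ X pairwise share no line; (3) there is a line ℓ', skew to ℓ, contained in every star plane centered at a point of ℓ ∩ X, and ℓ' is itself a star chord for X; (4) ℓ is contained in every star plane centered at a point of ℓ' ∩ X. -/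
open Module

/-- A star chord for the surface with affine cone `X`: a line of ℙ³(k) not
contained in the surface that passes through at least two star points. -/
def IsStarChord {k : Type*} [Field k] (q : ℕ) (X : Set (Fin 4 → k))
    (ℓ : Submodule k (Fin 4 → k)) : Prop :=
  IsLine ℓ ∧ ¬ ((ℓ : Set (Fin 4 → k)) ⊆ X) ∧
    ∃ c c' : Submodule k (Fin 4 → k), c ≠ c' ∧
      IsStarPoint q X c ∧ IsStarPoint q X c' ∧ c ≤ ℓ ∧ c' ≤ ℓ

/-!
Polarise the Frobenius form to `B x y = ∑ A i j * x i ^ q * y j`, which is `q`-semilinear in `x`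
and linear in `y`, and write `W⊥` for the `y` with `B x y = 0` for all `x ∈ W`.  A subspace `L`
lies on `X` exactly when `L ≤ L⊥`, so the lines of a star at `c` span the plane `c⊥`, and a star
point satisfies `c ≤ c⊥⊥`, which fails for a general point since `B` is not reflexive.  If `ℓ` joins
two star points and is not on `X`, a computation with the modular law then shows that `ℓ` and
`ℓ' = ℓ⊥` are complementary and orthogonal to each other in both orders.  This relation is symmetric
in `ℓ` and `ℓ'`.  Each of the two lines carries a nondegenerate binary Frobenius form, which has
`q + 1` zeros; the star at a zero on one line consists of its joins with the zeros on the other.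
-/

section Counting

open Polynomial

variable {k : Type*} [Field k]

/-- The dehomogenization at `y = 1` of the binary Frobenius form
`a x^(q+1) + b x^q y + c x y^q + d y^(q+1)`. -/
noncomputable def binaryFrobeniusPoly (q : ℕ) (a b c d : k) : k[X] :=
  C a * X ^ (q + 1) + C b * X ^ q + C c * X + C d

theorem natDegree_binaryFrobeniusPoly {q : ℕ} (hq : q ≠ 0) {a b c d : k} (ha : a ≠ 0) :
    (binaryFrobeniusPoly q a b c d).natDegree = q + 1 := by
  unfold binaryFrobeniusPoly
  compute_degree!
  simpa [hq] using ha

theorem separable_binaryFrobeniusPoly {q : ℕ} (hq : (q : k) = 0) {a b c d : k}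
    (hdet : a * d - b * c ≠ 0) : (binaryFrobeniusPoly q a b c d).Separable := by
  set f := binaryFrobeniusPoly q a b c d with hf
  have hderiv : derivative f = C a * X ^ q + C c := by
    simp [hf, binaryFrobeniusPoly, hq, derivative_X_pow]
  have hbezout : C a * f - (C a * X + C b) * derivative f = C (a * d - b * c) := by
    rw [hderiv, hf, binaryFrobeniusPoly]
    simp only [C_sub, C_mul]
    ring
  have hunit : C (a * d - b * c)⁻¹ * C (a * d - b * c) = (1 : k[X]) := by
    rw [← C_mul, inv_mul_cancel₀ hdet, C_1]
  refine ⟨C (a * d - b * c)⁻¹ * C a, -(C (a * d - b * c)⁻¹ * (C a * X + C b)), ?_⟩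
  linear_combination C (a * d - b * c)⁻¹ * hbezout + hunit

theorem ncard_setOf_binaryFrobenius_eq_zero [IsSepClosed k] {q : ℕ} (hq₀ : q ≠ 0)
    (hq : (q : k) = 0) {a b c d : k} (ha : a ≠ 0) (hdet : a * d - b * c ≠ 0) :
    {s : k | a * s ^ (q + 1) + b * s ^ q + c * s + d = 0}.ncard = q + 1 := by
  have hsep := separable_binaryFrobeniusPoly hq hdet
  have hroots : {s : k | a * s ^ (q + 1) + b * s ^ q + c * s + d = 0} =
      (binaryFrobeniusPoly q a b c d).rootSet k := by
    ext s
    rw [mem_rootSet_of_ne hsep.ne_zero]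
    simp [binaryFrobeniusPoly]
  rw [hroots, ← Nat.card_coe_set_eq, Nat.card_eq_fintype_card,
    card_rootSet_eq_natDegree hsep (IsSepClosed.splits_domain _ hsep),
    natDegree_binaryFrobeniusPoly hq₀ ha]

theorem iterateFrobenius_ne_id [IsSepClosed k] {p e : ℕ} [Fact p.Prime] [CharP k p] (he : e ≠ 0) :
    iterateFrobenius k p e ≠ RingHom.id k := by
  intro hid
  obtain ⟨x, hx⟩ := IsSepClosed.exists_root_C_mul_X_pow_add_C_mul_X_add_C' p (p ^ e) (1 : k) (-1)
    (-1) (dvd_pow_self p he) ((Fact.out : p.Prime).two_le.trans (Nat.le_self_pow he p)) (by simp)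
  have hfix : x ^ p ^ e = x := RingHom.congr_fun hid x
  simp [hfix] at hx

end Counting

section Points

variable {k V : Type*} [Field k] [AddCommGroup V] [Module k V]

/-- The points of the projectivization of `W` that lie on the projective variety with affine cone
`X`, encoded as one-dimensional subspaces. -/
def pointsOn (X : Set V) (W : Submodule k V) : Set (Submodule k V) :=
  {c | finrank k c = 1 ∧ c ≤ W ∧ (c : Set V) ⊆ X}

theorem finrank_sup_of_finrank_eq_one [FiniteDimensional k V] {c c' : Submodule k V}
    (hc : finrank k c = 1) (hc' : finrank k c' = 1) (hne : c ≠ c') :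
    finrank k (c ⊔ c' : Submodule k V) = 2 := by
  have hdisj : Disjoint c c' :=
    (Submodule.isAtom_iff_finrank_eq_one.2 hc).disjoint_of_ne
      (Submodule.isAtom_iff_finrank_eq_one.2 hc') hne
  have hdim := Submodule.finrank_sup_add_finrank_inf_eq c c'
  rw [hdisj.eq_bot, finrank_bot] at hdim
  lia

theorem sup_eq_of_finrank_eq_one [FiniteDimensional k V] {c c' L : Submodule k V}
    (hc : finrank k c = 1) (hc' : finrank k c' = 1) (hne : c ≠ c') (hcL : c ≤ L) (hcL' : c' ≤ L)
    (hL : finrank k L = 2) : c ⊔ c' = L :=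
  Submodule.eq_of_le_of_finrank_eq (sup_le hcL hcL')
    ((finrank_sup_of_finrank_eq_one hc hc' hne).trans hL.symm)

theorem exists_linearIndependent_pair_span_eq {W : Submodule k V} (hW : finrank k W = 2) {u : V}
    (huW : u ∈ W) (hu : u ≠ 0) :
    ∃ v, LinearIndependent k ![u, v] ∧ (k ∙ u) ⊔ (k ∙ v) = W := by
  have : FiniteDimensional k W := FiniteDimensional.of_finrank_pos (by lia)
  obtain ⟨v, hvW, hv⟩ : ∃ v ∈ W, v ∉ k ∙ u := by
    refine SetLike.not_le_iff_exists.1 fun hle => ?_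
    have := Submodule.finrank_mono hle
    rw [finrank_span_singleton hu] at this
    lia
  have hli : LinearIndependent k ![u, v] := (LinearIndependent.pair_iff' hu).2 fun a ha =>
    hv (Submodule.mem_span_singleton.2 ⟨a, ha⟩)
  have hspan : Submodule.span k (Set.range ![u, v]) = (k ∙ u) ⊔ (k ∙ v) := by
    rw [Matrix.range_cons, Matrix.range_cons, Matrix.range_empty, Set.union_empty,
      Submodule.span_union]
  refine ⟨v, hli, Submodule.eq_of_le_of_finrank_eq (by simp [huW, hvW]) ?_⟩
  rw [← hspan, finrank_span_eq_card hli, hW, Fintype.card_fin]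

theorem injective_span_singleton_smul_add {u v : V} (huv : LinearIndependent k ![u, v]) :
    Function.Injective fun s : k => k ∙ (s • u + v) := by
  intro s t hst
  have hmem : s • u + v ∈ k ∙ (t • u + v) := hst.le (Submodule.mem_span_singleton_self _)
  obtain ⟨r, hr⟩ := Submodule.mem_span_singleton.1 hmem
  have hrel : (r * t - s) • u + (r - 1) • v = 0 := by
    rw [← sub_eq_zero.2 hr]
    module
  obtain ⟨hrt, hr₁⟩ := LinearIndependent.pair_iff.1 huv _ _ hrel
  linear_combination t * hr₁ - hrt

theorem exists_eq_span_singleton_smul_add {u v : V} {c : Submodule k V} (hc : finrank k c = 1)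
    (hcuv : c ≤ (k ∙ u) ⊔ (k ∙ v)) (huc : u ∉ c) : ∃ s : k, c = k ∙ (s • u + v) := by
  obtain ⟨w, hw, rfl⟩ := (atom_iff_nonzero_span c).1 (Submodule.isAtom_iff_finrank_eq_one.2 hc)
  have hmem : w ∈ Submodule.span k {u, v} := by
    rw [Submodule.span_insert]
    exact hcuv (Submodule.mem_span_singleton_self w)
  obtain ⟨a, b, rfl⟩ := Submodule.mem_span_pair.1 hmem
  have hb : b ≠ 0 := by
    rintro rfl
    rw [zero_smul, add_zero] at hw huc
    have ha : a ≠ 0 := fun ha => hw (by rw [ha, zero_smul])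
    exact huc (Submodule.mem_span_singleton.2 ⟨a⁻¹, inv_smul_smul₀ ha u⟩)
  have hscale : b • ((b⁻¹ * a) • u + v) = a • u + b • v := by
    rw [smul_add, smul_smul, mul_inv_cancel_left₀ hb]
  exact ⟨b⁻¹ * a, by rw [← hscale, Submodule.span_singleton_smul_eq (IsUnit.mk0 b hb)]⟩

end Points

section SesquilinearForm

variable {k V : Type*} [Field k] [AddCommGroup V] [Module k V] {σ : k →+* k}

/-- The cone of isotropic vectors of a sesquilinear form. -/
def isotropicCone (B : V →ₛₗ[σ] V →ₗ[k] k) : Set V :=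
  {x | B x x = 0}

variable {B : V →ₛₗ[σ] V →ₗ[k] k}

theorem apply_self_smul_add (s : k) (u v : V) :
    B (s • u + v) (s • u + v) = B u u * (σ s * s) + B u v * σ s + B v u * s + B v v := by
  simp only [map_add, map_smulₛₗ, LinearMap.add_apply, LinearMap.smul_apply, smul_eq_mul,
    RingHom.id_apply]
  ring

theorem span_singleton_subset_isotropicCone_iff {v : V} :
    ((k ∙ v : Submodule k V) : Set V) ⊆ isotropicCone B ↔ B v v = 0 := by
  refine ⟨fun h => h (Submodule.mem_span_singleton_self v), fun hv x hx => ?_⟩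
  obtain ⟨c, rfl⟩ := Submodule.mem_span_singleton.1 hx
  simp [isotropicCone, hv]

theorem subset_isotropicCone_iff_le_orthogonalBilin (hσ : σ ≠ RingHom.id k) {L : Submodule k V} :
    (L : Set V) ⊆ isotropicCone B ↔ L ≤ L.orthogonalBilin B := by
  refine ⟨fun hL y hy x hx => ?_, fun hL x hx => hL hx x hx⟩
  obtain ⟨s, hs⟩ : ∃ s, σ s ≠ s := by
    by_contra! hfix
    exact hσ (RingHom.ext hfix)
  have hexpand (t : k) : B x y * σ t + B y x * t = 0 := by
    have hzero : B (t • x + y) (t • x + y) = 0 := hL (L.add_mem (L.smul_mem t hx) hy)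
    have hxx : B x x = 0 := hL hx
    have hyy : B y y = 0 := hL hy
    rw [apply_self_smul_add, hxx, hyy] at hzero
    linear_combination hzero
  have hskew : B x y + B y x = 0 := by simpa using hexpand 1
  have hmul : B x y * (σ s - s) = 0 := by linear_combination hexpand s - s * hskew
  exact (mul_eq_zero.1 hmul).resolve_right (sub_ne_zero.2 hs)

theorem not_subset_isotropicCone_of_disjoint (hσ : σ ≠ RingHom.id k) {W : Submodule k V}
    (hW : W ≠ ⊥) (hdisj : Disjoint W (W.orthogonalBilin B)) :
    ¬ (W : Set V) ⊆ isotropicCone B := fun hWX =>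
  hW (hdisj.eq_bot_of_le ((subset_isotropicCone_iff_le_orthogonalBilin hσ).1 hWX))

theorem mem_orthogonalBilin_span_singleton_iff {x y : V} :
    y ∈ (k ∙ x).orthogonalBilin B ↔ B x y = 0 := by
  refine ⟨fun h => h x (Submodule.mem_span_singleton_self x), fun h z hz => ?_⟩
  obtain ⟨c, rfl⟩ := Submodule.mem_span_singleton.1 hz
  simp [h]

theorem orthogonalBilin_sup (P Q : Submodule k V) :
    (P ⊔ Q).orthogonalBilin B = P.orthogonalBilin B ⊓ Q.orthogonalBilin B := by
  refine le_antisymm (le_inf (Submodule.orthogonalBilin_le le_sup_left)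
    (Submodule.orthogonalBilin_le le_sup_right)) fun y ⟨hyP, hyQ⟩ x hx => ?_
  obtain ⟨a, ha, b, hb, rfl⟩ := Submodule.mem_sup.1 hx
  simp [hyP a ha, hyQ b hb]

theorem finrank_orthogonalBilin_add_one [FiniteDimensional k V] (hB : B.SeparatingLeft)
    {c : Submodule k V} (hc : finrank k c = 1) :
    finrank k (c.orthogonalBilin B) + 1 = finrank k V := by
  obtain ⟨v, hv, rfl⟩ := (atom_iff_nonzero_span c).1 (Submodule.isAtom_iff_finrank_eq_one.2 hc)
  have hker : (k ∙ v).orthogonalBilin B = LinearMap.ker (B v) :=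
    Submodule.ext fun _ => mem_orthogonalBilin_span_singleton_iff
  have hBv : B v ≠ 0 := fun h => hv (hB v fun y => by rw [h, LinearMap.zero_apply])
  rw [hker, Dual.finrank_ker_add_one_of_ne_zero hBv]

theorem sup_eq_orthogonalBilin [FiniteDimensional k V] (hV : finrank k V = 4)
    (hB : B.SeparatingLeft) {c L₁ L₂ : Submodule k V} (hc : finrank k c = 1)
    (hL₁ : finrank k L₁ = 2) (hL₂ : finrank k L₂ = 2) (hne : L₁ ≠ L₂) (hcL₁ : c ≤ L₁)
    (hcL₂ : c ≤ L₂) (hiso₁ : L₁ ≤ L₁.orthogonalBilin B) (hiso₂ : L₂ ≤ L₂.orthogonalBilin B) :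
    L₁ ⊔ L₂ = c.orthogonalBilin B := by
  refine Submodule.eq_of_le_of_finrank_le
    (sup_le (hiso₁.trans (Submodule.orthogonalBilin_le hcL₁))
      (hiso₂.trans (Submodule.orthogonalBilin_le hcL₂))) ?_
  have hlt : L₁ < L₁ ⊔ L₂ := left_lt_sup.2 fun hle =>
    hne (Submodule.eq_of_le_of_finrank_eq hle (hL₂.trans hL₁.symm)).symm
  have := Submodule.finrank_lt_finrank_of_lt hlt
  have := finrank_orthogonalBilin_add_one hB hc
  lia

end SesquilinearForm

section BinaryForm

variable {k V : Type*} [Field k] [AddCommGroup V] [Module k V]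

theorem pointsOn_isotropicCone_eq_image {σ : k →+* k} {B : V →ₛₗ[σ] V →ₗ[k] k} {u v : V}
    (huv : LinearIndependent k ![u, v]) (hu : B u u ≠ 0) :
    pointsOn (isotropicCone B) ((k ∙ u) ⊔ (k ∙ v)) =
      (fun s : k => k ∙ (s • u + v)) '' {s | B (s • u + v) (s • u + v) = 0} := by
  ext c
  constructor
  · rintro ⟨hc, hcuv, hcX⟩
    obtain ⟨s, rfl⟩ := exists_eq_span_singleton_smul_add hc hcuv fun huc => hu (hcX huc)
    exact ⟨s, span_singleton_subset_isotropicCone_iff.1 hcX, rfl⟩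
  · rintro ⟨s, hs, rfl⟩
    have hne : s • u + v ≠ 0 := fun h => by
      simpa using (LinearIndependent.pair_iff.1 huv s 1 (by rwa [one_smul])).2
    refine ⟨finrank_span_singleton hne, ?_, span_singleton_subset_isotropicCone_iff.2 hs⟩
    rw [Submodule.span_singleton_le_iff_mem]
    exact add_mem (Submodule.smul_mem _ s (Submodule.mem_sup_left
      (Submodule.mem_span_singleton_self u)))
      (Submodule.mem_sup_right (Submodule.mem_span_singleton_self v))

theorem gram_det_ne_zero {σ : k →+* k} {B : V →ₛₗ[σ] V →ₗ[k] k} {u v : V}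
    (huv : LinearIndependent k ![u, v]) (hu : B u u ≠ 0)
    (hdisj : Disjoint ((k ∙ u) ⊔ (k ∙ v)) (((k ∙ u) ⊔ (k ∙ v)).orthogonalBilin B)) :
    B u u * B v v - B u v * B v u ≠ 0 := by
  intro hdet
  have hmem : B u v • u + -B u u • v ∈ (k ∙ u) ⊔ (k ∙ v) :=
    add_mem (Submodule.mem_sup_left (Submodule.mem_span_singleton.2 ⟨_, rfl⟩))
      (Submodule.mem_sup_right (Submodule.mem_span_singleton.2 ⟨_, rfl⟩))
  have horth : B u v • u + -B u u • v ∈ ((k ∙ u) ⊔ (k ∙ v)).orthogonalBilin B := by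
    rw [orthogonalBilin_sup, Submodule.mem_inf, mem_orthogonalBilin_span_singleton_iff,
      mem_orthogonalBilin_span_singleton_iff]
    simp only [map_add, map_smul, smul_eq_mul]
    constructor
    · ring
    · linear_combination -hdet
  have hzero := Submodule.disjoint_def.1 hdisj _ hmem horth
  exact hu (neg_eq_zero.1 (LinearIndependent.pair_iff.1 huv _ _ hzero).2)

theorem ncard_pointsOn_isotropicCone [IsSepClosed k] {p e : ℕ} [Fact p.Prime] [CharP k p]
    (he : e ≠ 0) {B : V →ₛₗ[iterateFrobenius k p e] V →ₗ[k] k} {W : Submodule k V}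
    (hW : finrank k W = 2) (hdisj : Disjoint W (W.orthogonalBilin B)) :
    (pointsOn (isotropicCone B) W).ncard = p ^ e + 1 := by
  have hWbot : W ≠ ⊥ := by
    rintro rfl
    rw [finrank_bot] at hW
    lia
  obtain ⟨u, huW, hu : B u u ≠ 0⟩ := Set.not_subset.1
    (not_subset_isotropicCone_of_disjoint (iterateFrobenius_ne_id he) hWbot hdisj)
  obtain ⟨v, huv, rfl⟩ := exists_linearIndependent_pair_span_eq hW huW fun h => hu (by simp [h])
  have hq : ((p ^ e : ℕ) : k) = 0 := by simp [he]
  rw [pointsOn_isotropicCone_eq_image huv hu,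
    Set.ncard_image_of_injective _ (injective_span_singleton_smul_add huv),
    ← ncard_setOf_binaryFrobenius_eq_zero (pow_ne_zero e (Fact.out : p.Prime).ne_zero) hq hu
      (gram_det_ne_zero huv hu hdisj)]
  simp only [apply_self_smul_add, iterateFrobenius_def, pow_succ]

end BinaryForm

section OrthogonalDecomposition

variable {k V : Type*} [Field k] [AddCommGroup V] [Module k V] {σ : k →+* k}

/-- `P` and `Q` are complementary subspaces that are orthogonal for the sesquilinear form `B`.
Both orders of the arguments are required, as `B` need not be reflexive. -/
structure IsOrthogonalDecomposition (B : V →ₛₗ[σ] V →ₗ[k] k) (P Q : Submodule k V) : Prop where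
  isCompl : IsCompl P Q
  left_le : P ≤ Q.orthogonalBilin B
  right_le : Q ≤ P.orthogonalBilin B

variable {B : V →ₛₗ[σ] V →ₗ[k] k} {P Q c c' : Submodule k V}

namespace IsOrthogonalDecomposition

theorem symm (h : IsOrthogonalDecomposition B P Q) : IsOrthogonalDecomposition B Q P :=
  ⟨h.isCompl.symm, h.right_le, h.left_le⟩

theorem disjoint_orthogonalBilin (h : IsOrthogonalDecomposition B P Q) (hB : B.SeparatingRight) :
    Disjoint P (P.orthogonalBilin B) := by
  refine Submodule.disjoint_def.2 fun y hyP hy => hB y fun x => ?_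
  have hytop : y ∈ (P ⊔ Q).orthogonalBilin B := by
    rw [orthogonalBilin_sup]
    exact ⟨hy, h.left_le hyP⟩
  exact hytop x (h.isCompl.sup_eq_top ▸ Submodule.mem_top)

theorem sup_subset_isotropicCone (h : IsOrthogonalDecomposition B P Q) (hcP : c ≤ P)
    (hcQ : c' ≤ Q) (hc : (c : Set V) ⊆ isotropicCone B) (hc' : (c' : Set V) ⊆ isotropicCone B) :
    ((c ⊔ c' : Submodule k V) : Set V) ⊆ isotropicCone B := by
  intro x hx
  obtain ⟨y, hy, z, hz, rfl⟩ := Submodule.mem_sup.1 hx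
  have hyy : B y y = 0 := hc hy
  have hzz : B z z = 0 := hc' hz
  have hyz : B y z = 0 := h.right_le (hcQ hz) y (hcP hy)
  have hzy : B z y = 0 := h.left_le (hcP hy) z (hcQ hz)
  simp [isotropicCone, hyy, hzz, hyz, hzy]

end IsOrthogonalDecomposition

theorem disjoint_sup_orthogonalBilin (hc : finrank k c = 1) (hc' : finrank k c' = 1)
    (hcc : c ≤ c.orthogonalBilin B) (hcc' : c' ≤ c'.orthogonalBilin B)
    (hdual : c ≤ (c.orthogonalBilin B).orthogonalBilin B)
    (hdual' : c' ≤ (c'.orthogonalBilin B).orthogonalBilin B)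
    (hsup : ¬ c ⊔ c' ≤ (c ⊔ c').orthogonalBilin B) :
    Disjoint (c ⊔ c') ((c ⊔ c').orthogonalBilin B) := by
  rw [orthogonalBilin_sup] at hsup ⊢
  have hleft : ¬ c ≤ c'.orthogonalBilin B := fun h =>
    hsup (sup_le (le_inf hcc h) (le_inf (hdual'.trans (Submodule.orthogonalBilin_le h)) hcc'))
  have hright : ¬ c' ≤ c.orthogonalBilin B := fun h =>
    hleft (hdual.trans (Submodule.orthogonalBilin_le h))
  rw [disjoint_iff]
  calc (c ⊔ c') ⊓ (c.orthogonalBilin B ⊓ c'.orthogonalBilin B)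
      = (c ⊔ c' ⊓ c.orthogonalBilin B) ⊓ c'.orthogonalBilin B := by
        rw [← inf_assoc, sup_inf_assoc_of_le c' hcc]
    _ = c ⊓ c'.orthogonalBilin B := by
        rw [((Submodule.isAtom_iff_finrank_eq_one.2 hc').not_le_iff_disjoint.1 hright).eq_bot,
          sup_bot_eq]
    _ = ⊥ := ((Submodule.isAtom_iff_finrank_eq_one.2 hc).not_le_iff_disjoint.1 hleft).eq_bot

theorem finrank_le_finrank_sup_add_finrank_orthogonalBilin [FiniteDimensional k V]
    (hB : B.SeparatingLeft) (hc : finrank k c = 1) (hc' : finrank k c' = 1) (hne : c ≠ c') :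
    finrank k V ≤ finrank k (c ⊔ c' : Submodule k V) +
      finrank k ((c ⊔ c').orthogonalBilin B) := by
  have hsum := Submodule.finrank_sup_add_finrank_inf_eq (c.orthogonalBilin B) (c'.orthogonalBilin B)
  have hle := Submodule.finrank_le (c.orthogonalBilin B ⊔ c'.orthogonalBilin B)
  have hdim := finrank_orthogonalBilin_add_one hB hc
  have hdim' := finrank_orthogonalBilin_add_one hB hc'
  rw [finrank_sup_of_finrank_eq_one hc hc' hne, orthogonalBilin_sup]
  lia

theorem isOrthogonalDecomposition_sup [FiniteDimensional k V] (hB : B.SeparatingLeft)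
    (hc : finrank k c = 1) (hc' : finrank k c' = 1) (hne : c ≠ c')
    (hcc : c ≤ c.orthogonalBilin B) (hcc' : c' ≤ c'.orthogonalBilin B)
    (hdual : c ≤ (c.orthogonalBilin B).orthogonalBilin B)
    (hdual' : c' ≤ (c'.orthogonalBilin B).orthogonalBilin B)
    (hsup : ¬ c ⊔ c' ≤ (c ⊔ c').orthogonalBilin B) :
    IsOrthogonalDecomposition B (c ⊔ c') ((c ⊔ c').orthogonalBilin B) where
  isCompl := (Submodule.isCompl_iff_disjoint _ _
    (finrank_le_finrank_sup_add_finrank_orthogonalBilin hB hc hc' hne)).2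
    (disjoint_sup_orthogonalBilin hc hc' hcc hcc' hdual hdual' hsup)
  left_le := sup_le
    (hdual.trans (Submodule.orthogonalBilin_le (Submodule.orthogonalBilin_le le_sup_left)))
    (hdual'.trans (Submodule.orthogonalBilin_le (Submodule.orthogonalBilin_le le_sup_right)))
  right_le := le_rfl

end OrthogonalDecomposition

section FrobeniusForm

open scoped Matrix

variable {k n : Type*} [Field k] [Fintype n] [DecidableEq n]

/-- The polarisation `∑ i, ∑ j, A i j * x i ^ (p ^ e) * y j` of the Frobenius form with matrix `A`,
semilinear in `x` for the `e`-th iterate of Frobenius. -/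
noncomputable def frobeniusSesqForm (p e : ℕ) [ExpChar k p] (A : Matrix n n k) :
    (n → k) →ₛₗ[iterateFrobenius k p e] (n → k) →ₗ[k] k :=
  Matrix.toLinearMapₛₗ₂' k (iterateFrobenius k p e) (RingHom.id k) A

variable {p e : ℕ} [ExpChar k p] {A : Matrix n n k}

theorem frobeniusSesqForm_apply (x y : n → k) :
    frobeniusSesqForm p e A x y = x ^ p ^ e ⬝ᵥ A *ᵥ y := by
  simp only [frobeniusSesqForm, Matrix.toLinearMapₛₗ₂'_apply, iterateFrobenius_def,
    RingHom.id_apply, smul_eq_mul, dotProduct, Matrix.mulVec, Finset.mul_sum, Pi.pow_apply,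
    mul_comm (y _)]

theorem separatingLeft_frobeniusSesqForm (hA : IsUnit A) :
    (frobeniusSesqForm p e A).SeparatingLeft := by
  intro x hx
  have hvec : x ^ p ^ e ᵥ* A = 0 := dotProduct_eq_zero _ fun y => by
    rw [← Matrix.dotProduct_mulVec, ← frobeniusSesqForm_apply, hx]
  have hpow : x ^ p ^ e = 0 :=
    Matrix.vecMul_injective_of_isUnit hA (hvec.trans (Matrix.zero_vecMul A).symm)
  exact eq_zero_of_pow_eq_zero hpow

theorem separatingRight_frobeniusSesqForm (hA : IsUnit A) :
    (frobeniusSesqForm p e A).SeparatingRight := by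
  intro y hy
  have hvec : A *ᵥ y = 0 := funext fun i => by
    have hpow : (Pi.single i 1 : n → k) ^ p ^ e = Pi.single i 1 := by
      ext j
      simp [Pi.single_apply, ite_pow, (expChar_pos k p).ne']
    calc (A *ᵥ y) i = Pi.single i 1 ⬝ᵥ A *ᵥ y := (single_one_dotProduct i _).symm
      _ = frobeniusSesqForm p e A (Pi.single i 1) y := by rw [frobeniusSesqForm_apply, hpow]
      _ = 0 := hy _
  exact Matrix.mulVec_injective_of_isUnit hA (hvec.trans (Matrix.mulVec_zero A).symm)

theorem isotropicCone_frobeniusSesqForm (A : Matrix (Fin 4) (Fin 4) k) :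
    isotropicCone (frobeniusSesqForm p e A) = extremalCone k (p ^ e) A := by
  ext x
  simp only [isotropicCone, extremalCone, frobForm, Set.mem_ofPred_eq, frobeniusSesqForm_apply,
    dotProduct, Matrix.mulVec, Finset.mul_sum, Pi.pow_apply]
  simp only [mul_left_comm, mul_assoc]

end FrobeniusForm

section Stars

variable {k : Type*} [Field k] {q : ℕ} {X : Set (Fin 4 → k)}
  {c c' H ℓ : Submodule k (Fin 4 → k)} {S S' : Set (Submodule k (Fin 4 → k))}

theorem IsStarAt.inter_eq_empty (hS : IsStarAt q X S c) (hS' : IsStarAt q X S' c') (hne : c ≠ c')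
    (hℓ : IsLine ℓ) (hcℓ : c ≤ ℓ) (hcℓ' : c' ≤ ℓ) (hℓX : ¬ (ℓ : Set (Fin 4 → k)) ⊆ X) :
    S ∩ S' = ∅ := by
  refine Set.eq_empty_of_forall_notMem fun L ⟨hL, hL'⟩ => hℓX ?_
  obtain ⟨⟨hLline, hLX⟩, hcL⟩ := hS.2.2 L hL
  have hLℓ : L = ℓ := calc
    L = c ⊔ c' := (sup_eq_of_finrank_eq_one hS.1 hS'.1 hne hcL (hS'.2.2 L hL').2 hLline).symm
    _ = ℓ := sup_eq_of_finrank_eq_one hS.1 hS'.1 hne hcℓ hcℓ' hℓ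
  exact hLℓ ▸ hLX

variable {σ : k →+* k} {B : (Fin 4 → k) →ₛₗ[σ] (Fin 4 → k) →ₗ[k] k}

theorem IsStarAt.exists_sup_eq_orthogonalBilin (hσ : σ ≠ RingHom.id k) (hq : q ≠ 0)
    (hB : B.SeparatingLeft) (hS : IsStarAt q (isotropicCone B) S c) :
    ∃ L₁ ∈ S, ∃ L₂ ∈ S, L₁ ≤ L₁.orthogonalBilin B ∧ L₂ ≤ L₂.orthogonalBilin B ∧
      L₁ ⊔ L₂ = c.orthogonalBilin B := by
  obtain ⟨hc, hcard, hlines⟩ := hS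
  have hlt : 1 < S.ncard := by lia
  obtain ⟨L₁, hL₁, L₂, hL₂, hne⟩ := (Set.one_lt_ncard (Set.finite_of_ncard_pos (by lia))).1 hlt
  obtain ⟨⟨hline₁, hX₁⟩, hcL₁⟩ := hlines L₁ hL₁
  obtain ⟨⟨hline₂, hX₂⟩, hcL₂⟩ := hlines L₂ hL₂
  rw [subset_isotropicCone_iff_le_orthogonalBilin hσ] at hX₁ hX₂
  exact ⟨L₁, hL₁, L₂, hL₂, hX₁, hX₂, sup_eq_orthogonalBilin (finrank_fin_fun k) hB hc hline₁ hline₂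
    hne hcL₁ hcL₂ hX₁ hX₂⟩

theorem IsStarPoint.le_orthogonalBilin (hσ : σ ≠ RingHom.id k) (hq : q ≠ 0)
    (hB : B.SeparatingLeft) (hc : IsStarPoint q (isotropicCone B) c) :
    c ≤ c.orthogonalBilin B := by
  obtain ⟨S, hS⟩ := hc
  obtain ⟨L, hL, _, -, -, -, hsup⟩ := hS.exists_sup_eq_orthogonalBilin hσ hq hB
  exact (hS.2.2 L hL).2.trans (le_sup_left.trans hsup.le)

theorem IsStarPoint.le_orthogonalBilin_orthogonalBilin (hσ : σ ≠ RingHom.id k) (hq : q ≠ 0)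
    (hB : B.SeparatingLeft) (hc : IsStarPoint q (isotropicCone B) c) :
    c ≤ (c.orthogonalBilin B).orthogonalBilin B := by
  obtain ⟨S, hS⟩ := hc
  obtain ⟨L₁, hL₁, L₂, hL₂, hiso₁, hiso₂, hsup⟩ := hS.exists_sup_eq_orthogonalBilin hσ hq hB
  rw [← hsup, orthogonalBilin_sup]
  exact le_inf ((hS.2.2 L₁ hL₁).2.trans hiso₁) ((hS.2.2 L₂ hL₂).2.trans hiso₂)

theorem IsStarPlaneAt.orthogonalBilin_le (hσ : σ ≠ RingHom.id k) (hq : q ≠ 0)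
    (hB : B.SeparatingLeft) (hH : IsStarPlaneAt q (isotropicCone B) H c) :
    c.orthogonalBilin B ≤ H := by
  obtain ⟨-, S, hS, hunion⟩ := hH
  have hle (L) (hL : L ∈ S) : L ≤ H := fun x hx =>
    (hunion.ge (Set.mem_biUnion hL hx)).2
  obtain ⟨L₁, hL₁, L₂, hL₂, -, -, hsup⟩ := hS.exists_sup_eq_orthogonalBilin hσ hq hB
  exact hsup.ge.trans (sup_le (hle L₁ hL₁) (hle L₂ hL₂))

theorem IsStarChord.isOrthogonalDecomposition (hσ : σ ≠ RingHom.id k) (hq : q ≠ 0)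
    (hB : B.SeparatingLeft) (hℓ : IsStarChord q (isotropicCone B) ℓ) :
    IsOrthogonalDecomposition B ℓ (ℓ.orthogonalBilin B) := by
  obtain ⟨hline, hℓX, c, c', hne, hc, hc', hcℓ, hcℓ'⟩ := hℓ
  have hcpt : IsPoint c := hc.choose_spec.1
  have hcpt' : IsPoint c' := hc'.choose_spec.1
  obtain rfl := sup_eq_of_finrank_eq_one hcpt hcpt' hne hcℓ hcℓ' hline
  rw [subset_isotropicCone_iff_le_orthogonalBilin hσ] at hℓX
  exact isOrthogonalDecomposition_sup hB hcpt hcpt' hne (hc.le_orthogonalBilin hσ hq hB)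
    (hc'.le_orthogonalBilin hσ hq hB) (hc.le_orthogonalBilin_orthogonalBilin hσ hq hB)
    (hc'.le_orthogonalBilin_orthogonalBilin hσ hq hB) hℓX

namespace IsOrthogonalDecomposition

variable {P Q : Submodule k (Fin 4 → k)}

theorem isLine_right (h : IsOrthogonalDecomposition B P Q) (hP : IsLine P) : IsLine Q := by
  have hdim := Submodule.finrank_add_eq_of_isCompl h.isCompl
  have hline : finrank k P = 2 := hP
  rw [finrank_fin_fun, hline] at hdim
  exact Nat.add_left_cancel hdim

theorem injOn_sup (h : IsOrthogonalDecomposition B P Q) (hcP : c ≤ P) :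
    Set.InjOn (c ⊔ ·) (Set.Iic Q) := by
  have hinf (d) (hd : d ≤ Q) : (c ⊔ d) ⊓ Q = d := by
    rw [sup_comm, sup_inf_assoc_of_le c hd, (h.isCompl.disjoint.mono_left hcP).eq_bot, sup_bot_eq]
  intro d hd d' hd' hdd'
  rw [← hinf d hd, ← hinf d' hd']
  exact congrArg (· ⊓ Q) hdd'

theorem isStarAt_image_sup (h : IsOrthogonalDecomposition B P Q)
    (hcard : (pointsOn (isotropicCone B) Q).ncard = q + 1) (hc : c ∈ pointsOn (isotropicCone B) P) :
    IsStarAt q (isotropicCone B) ((c ⊔ ·) '' pointsOn (isotropicCone B) Q) c := by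
  obtain ⟨hcpt, hcP, hcX⟩ := hc
  refine ⟨hcpt, ?_, ?_⟩
  · rw [((h.injOn_sup hcP).mono fun d hd => hd.2.1).ncard_image, hcard]
  · rintro _ ⟨d, ⟨hdpt, hdQ, hdX⟩, rfl⟩
    have hne : c ≠ d := by
      rintro rfl
      have hbot : c = ⊥ := le_bot_iff.1 (h.isCompl.disjoint hcP hdQ)
      rw [hbot, finrank_bot] at hdpt
      lia
    exact ⟨⟨finrank_sup_of_finrank_eq_one hcpt hdpt hne,
      h.sup_subset_isotropicCone hcP hdQ hcX hdX⟩, le_sup_left⟩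

theorem isStarPoint (h : IsOrthogonalDecomposition B P Q)
    (hcard : (pointsOn (isotropicCone B) Q).ncard = q + 1) (hc : c ∈ pointsOn (isotropicCone B) P) :
    IsStarPoint q (isotropicCone B) c :=
  ⟨_, h.isStarAt_image_sup hcard hc⟩

theorem not_subset_isotropicCone (h : IsOrthogonalDecomposition B P Q) (hσ : σ ≠ RingHom.id k)
    (hB : B.SeparatingRight) (hP : IsLine P) : ¬ (P : Set (Fin 4 → k)) ⊆ isotropicCone B := by
  refine not_subset_isotropicCone_of_disjoint hσ ?_ (h.disjoint_orthogonalBilin hB)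
  rintro rfl
  rw [IsLine, finrank_bot] at hP
  lia

theorem isStarChord (h : IsOrthogonalDecomposition B P Q) (hσ : σ ≠ RingHom.id k) (hq : q ≠ 0)
    (hB : B.SeparatingRight) (hP : IsLine P)
    (hcardP : (pointsOn (isotropicCone B) P).ncard = q + 1)
    (hcardQ : (pointsOn (isotropicCone B) Q).ncard = q + 1) :
    IsStarChord q (isotropicCone B) P := by
  have hlt : 1 < (pointsOn (isotropicCone B) P).ncard := by lia
  obtain ⟨c, hc, c', hc', hne⟩ := (Set.one_lt_ncard (Set.finite_of_ncard_pos (by lia))).1 hlt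
  exact ⟨hP, h.not_subset_isotropicCone hσ hB hP, c, c', hne, h.isStarPoint hcardQ hc,
    h.isStarPoint hcardQ hc', hc.2.1, hc'.2.1⟩

theorem le_of_isStarPlaneAt (h : IsOrthogonalDecomposition B P Q) (hσ : σ ≠ RingHom.id k)
    (hq : q ≠ 0) (hB : B.SeparatingLeft) (hcP : c ≤ P)
    (hH : IsStarPlaneAt q (isotropicCone B) H c) : Q ≤ H :=
  h.right_le.trans ((Submodule.orthogonalBilin_le hcP).trans (hH.orthogonalBilin_le hσ hq hB))

end IsOrthogonalDecomposition

end Stars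

theorem star_chord_properties_general {k : Type*} [Field k] [IsSepClosed k]
    (p e q : ℕ) (hp : p.Prime) (hchar : CharP k p) (he : 1 ≤ e) (hq : q = p ^ e)
    (A : Matrix (Fin 4) (Fin 4) k) (hA : IsUnit A)
    (ℓ : Submodule k (Fin 4 → k)) (hℓ : IsStarChord q (extremalCone k q A) ℓ) :
    ({c : Submodule k (Fin 4 → k) |
        IsPoint c ∧ c ≤ ℓ ∧ (c : Set (Fin 4 → k)) ⊆ extremalCone k q A}.ncard = q + 1 ∧
      ∀ c : Submodule k (Fin 4 → k),
        IsPoint c → c ≤ ℓ → (c : Set (Fin 4 → k)) ⊆ extremalCone k q A →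
          IsStarPoint q (extremalCone k q A) c) ∧
    (∀ c c' : Submodule k (Fin 4 → k),
      IsPoint c → c ≤ ℓ → (c : Set (Fin 4 → k)) ⊆ extremalCone k q A →
      IsPoint c' → c' ≤ ℓ → (c' : Set (Fin 4 → k)) ⊆ extremalCone k q A →
      c ≠ c' →
      ∀ S S' : Set (Submodule k (Fin 4 → k)),
        IsStarAt q (extremalCone k q A) S c → IsStarAt q (extremalCone k q A) S' c' →
          S ∩ S' = ∅) ∧
    (∃ ℓ' : Submodule k (Fin 4 → k), IsLine ℓ' ∧ SkewLine ℓ ℓ' ∧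
      IsStarChord q (extremalCone k q A) ℓ' ∧
      (∀ c H : Submodule k (Fin 4 → k),
        IsPoint c → c ≤ ℓ → (c : Set (Fin 4 → k)) ⊆ extremalCone k q A →
          IsStarPlaneAt q (extremalCone k q A) H c → ℓ' ≤ H) ∧
      (∀ c H : Submodule k (Fin 4 → k),
        IsPoint c → c ≤ ℓ' → (c : Set (Fin 4 → k)) ⊆ extremalCone k q A →
          IsStarPlaneAt q (extremalCone k q A) H c → ℓ ≤ H)) := by
  subst hq
  have : Fact p.Prime := ⟨hp⟩
  have he₀ : e ≠ 0 := by lia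
  have hq₀ : p ^ e ≠ 0 := pow_ne_zero e hp.ne_zero
  have hσ := iterateFrobenius_ne_id (k := k) (p := p) he₀
  have hleft := separatingLeft_frobeniusSesqForm (p := p) (e := e) hA
  have hright := separatingRight_frobeniusSesqForm (p := p) (e := e) hA
  rw [← isotropicCone_frobeniusSesqForm] at hℓ ⊢
  have hdecomp := hℓ.isOrthogonalDecomposition hσ hq₀ hleft
  have hline := hdecomp.isLine_right hℓ.1
  have hcard := ncard_pointsOn_isotropicCone he₀ hℓ.1 (hdecomp.disjoint_orthogonalBilin hright)
  have hcard' := ncard_pointsOn_isotropicCone he₀ hline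
    (hdecomp.symm.disjoint_orthogonalBilin hright)
  refine ⟨⟨hcard, fun c hc hcℓ hcX => hdecomp.isStarPoint hcard' ⟨hc, hcℓ, hcX⟩⟩, ?_, _, hline,
    hdecomp.isCompl.inf_eq_bot, hdecomp.symm.isStarChord hσ hq₀ hright hline hcard' hcard, ?_, ?_⟩
  · exact fun c c' _ hcℓ _ _ hcℓ' _ hne S S' hS hS' =>
      hS.inter_eq_empty hS' hne hℓ.1 hcℓ hcℓ' hℓ.2.1
  · exact fun c H _ hcℓ _ hH => hdecomp.le_of_isStarPlaneAt hσ hq₀ hleft hcℓ hH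
  · exact fun c H _ hcℓ' _ hH => hdecomp.symm.le_of_isStarPlaneAt hσ hq₀ hleft hcℓ' hH

/-- Let `ℓ` be a star chord for a smooth extremal surface
`X` of degree `q+1` in ℙ³(k).  Then:
(1) `ℓ` meets `X` in exactly `q+1` distinct points, each a star point of `X`;
(2) the stars centered at the points of `ℓ ∩ X` pairwise share no line;
(3) there is a line `ℓ'`, skew to `ℓ`, contained in every star plane centered
at a point of `ℓ ∩ X`, and `ℓ'` is itself a star chord for `X`;
(4) `ℓ` is contained in every star plane centered at a point of `ℓ' ∩ X`. -/
theorem star_chord_properties {k : Type*} [Field k] [IsAlgClosed k]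
    (p e q : ℕ) (hp : p.Prime) (hchar : CharP k p) (he : 1 ≤ e) (hq : q = p ^ e)
    (A : Matrix (Fin 4) (Fin 4) k) (hA : IsUnit A)
    (ℓ : Submodule k (Fin 4 → k)) (hℓ : IsStarChord q (extremalCone k q A) ℓ) :
    -- (1)
    ({c : Submodule k (Fin 4 → k) |
        IsPoint c ∧ c ≤ ℓ ∧ (c : Set (Fin 4 → k)) ⊆ extremalCone k q A}.ncard = q + 1 ∧
      ∀ c : Submodule k (Fin 4 → k),
        IsPoint c → c ≤ ℓ → (c : Set (Fin 4 → k)) ⊆ extremalCone k q A →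
          IsStarPoint q (extremalCone k q A) c) ∧
    -- (2)
    (∀ c c' : Submodule k (Fin 4 → k),
      IsPoint c → c ≤ ℓ → (c : Set (Fin 4 → k)) ⊆ extremalCone k q A →
      IsPoint c' → c' ≤ ℓ → (c' : Set (Fin 4 → k)) ⊆ extremalCone k q A →
      c ≠ c' →
      ∀ S S' : Set (Submodule k (Fin 4 → k)),
        IsStarAt q (extremalCone k q A) S c → IsStarAt q (extremalCone k q A) S' c' →
          S ∩ S' = ∅) ∧
    -- (3) and (4)
    (∃ ℓ' : Submodule k (Fin 4 → k), IsLine ℓ' ∧ SkewLine ℓ ℓ' ∧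
      IsStarChord q (extremalCone k q A) ℓ' ∧
      (∀ c H : Submodule k (Fin 4 → k),
        IsPoint c → c ≤ ℓ → (c : Set (Fin 4 → k)) ⊆ extremalCone k q A →
          IsStarPlaneAt q (extremalCone k q A) H c → ℓ' ≤ H) ∧
      (∀ c H : Submodule k (Fin 4 → k),
        IsPoint c → c ≤ ℓ' → (c : Set (Fin 4 → k)) ⊆ extremalCone k q A →
          IsStarPlaneAt q (extremalCone k q A) H c → ℓ ≤ H)) :=
  star_chord_properties_general p e q hp hchar he hq A hA ℓ hℓ
end

section
/- Let X be the smooth extremal surface in ℙ³(k) of degree q+1 cut out by a full-rank Frobenius form whose matrix A is Hermitian, i.e. (A^{[q]})ᵀ = A (so that every entry of A lies in F_{q²}). Then a point of X is a star point of X if and only if it is an F_{q²}-point, i.e. it admits a homogeneous coordinate representative all of whose coordinates lie in F_{q²}. -/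
open Module

/-! Let `σ` be the `q`-power map of `k`, let `B x y = ∑ A i j * σ (x i) * y j`, and let `T` raise
coordinates to the power `q²`, so that `F_{q²}`-points are spanned by fixed vectors of `T`.
Hermitian symmetry reads `σ (B x y) = B y (T x)`.

If two lines of the surface pass through `v`, they span the tangent space `ker (B v)`, and by
polarization `B w v = 0` for every `w` in it. But `B w (T v) = σ (B v w)` vanishes there too, and a
`σ`-semilinear functional vanishing on `ker (B v)` is a multiple of `σ ∘ B v`. Nondegeneracy makes
`v` proportional to `T v`, and `v` can be rescaled to a fixed vector.

Conversely, if `T v = v` and `B v v = 0`, then `ker (B v)` has an orthogonal basis `v, x, y` of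
fixed vectors with `x` and `y` anisotropic. The lines joining `v` to `x + t • y` with
`t ^ (q + 1) = -(B x x / B y y)` lie on the surface, and this equation has `q + 1` solutions since
its right-hand side is fixed by `σ`. -/

section PowerEquations

open Polynomial

variable {k : Type*} [Field k] {q : ℕ}

theorem X_pow_add_one_sub_C_dvd (hq : q ≠ 0) {c : k} (hc : c ≠ 0) (hcq : c ^ q = c) :
    (X ^ (q + 1) - C c : k[X]) ∣ X ^ q ^ 2 - X := by
  obtain ⟨r, rfl⟩ := Nat.exists_eq_add_one_of_ne_zero hq
  have hpow : c ^ r = 1 := mul_right_cancel₀ hc (by rw [one_mul, ← pow_succ, hcq])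
  have hdvd := sub_dvd_pow_sub_pow (X ^ (r + 1 + 1) : k[X]) (C c) r
  rw [← C_pow, hpow, C_1] at hdvd
  have hfactor : (X ^ (r + 1) ^ 2 - X : k[X]) = ((X ^ (r + 1 + 1)) ^ r - 1) * X := by ring
  exact hfactor ▸ hdvd.mul_right X

theorem ncard_setOf_pow_add_one_eq (hq : 1 < q) (hqk : (q : k) = 0)
    (hsplits : (X ^ q ^ 2 - X : k[X]).Splits) {c : k} (hc : c ≠ 0) (hcq : c ^ q = c) :
    {t : k | t ^ (q + 1) = c}.ncard = q + 1 := by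
  classical
  have hsplits' : (X ^ (q + 1) - C c : k[X]).Splits :=
    hsplits.of_dvd (FiniteField.X_pow_card_sub_X_ne_zero k (one_lt_pow₀ hq two_ne_zero))
      (X_pow_add_one_sub_C_dvd (by omega) hc hcq)
  have hsep : (X ^ (q + 1) - C c : k[X]).Separable :=
    separable_X_pow_sub_C c (by simp [hqk]) hc
  have hset : {t : k | t ^ (q + 1) = c} = (X ^ (q + 1) - C c : k[X]).roots.toFinset := by
    ext t
    simp [X_pow_sub_C_ne_zero (Nat.succ_pos q) c, sub_eq_zero]
  rw [hset, Set.ncard_coe_finset, Multiset.toFinset_card_of_nodup (nodup_roots hsep),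
    ← hsplits'.natDegree_eq_card_roots, natDegree_X_pow_sub_C]

theorem exists_pow_sq_eq_self_and_pow_ne_self (hq : 1 < q) (hqk : (q : k) = 0)
    (hsplits : (X ^ q ^ 2 - X : k[X]).Splits) : ∃ t : k, t ^ q ^ 2 = t ∧ t ^ q ≠ t := by
  by_contra! hfix
  have hsub : {t : k | t ^ (q + 1) = 1} ⊆ {1, -1} := by
    intro t ht
    have ht1 : t ^ (q + 1) = 1 := ht
    have ht0 : t ≠ 0 := by
      rintro rfl
      simp at ht1
    have hsq : t ^ q ^ 2 = t := by
      refine mul_right_cancel₀ (pow_ne_zero q ht0) ?_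
      calc t ^ q ^ 2 * t ^ q = (t ^ (q + 1)) ^ q := by ring
        _ = t * t ^ q := by rw [ht1, one_pow, ← pow_succ', ht1]
    rw [pow_succ, hfix t hsq] at ht1
    exact mul_self_eq_one_iff.1 ht1
  have hcard := Set.ncard_le_ncard hsub
  rw [ncard_setOf_pow_add_one_eq hq hqk hsplits one_ne_zero (one_pow q)] at hcard
  have hpair := (Set.ncard_insert_le (1 : k) {-1}).trans_eq (by rw [Set.ncard_singleton])
  omega

end PowerEquations

section LinearAlgebra

variable {k V : Type*} [Field k] [AddCommGroup V] [Module k V]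

theorem exists_forall_eq_mul_of_ker_le_ker {σ : k →+* k} {φ : V →ₗ[k] k} {f : V →ₛₗ[σ] k}
    (h : LinearMap.ker φ ≤ LinearMap.ker f) : ∃ l : k, ∀ w, f w = l * σ (φ w) := by
  by_cases hφ : φ = 0
  · subst hφ
    exact ⟨0, fun w => by simpa using h (x := w) (by simp)⟩
  obtain ⟨u, hu⟩ := LinearMap.surjective hφ 1
  refine ⟨f u, fun w => ?_⟩
  have hker : w - φ w • u ∈ LinearMap.ker f := h (by simp [hu])
  rw [LinearMap.mem_ker, map_sub, map_smulₛₗ, sub_eq_zero, smul_eq_mul] at hker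
  rw [hker, mul_comm]

theorem ker_eq_sup_of_ne [FiniteDimensional k V] (hV : finrank k V ≤ 4) {φ : V →ₗ[k] k}
    (hφ : φ ≠ 0) {L M : Submodule k V} (hL : finrank k L = 2) (hM : finrank k M = 2)
    (hLM : L ≠ M) (hLφ : L ≤ LinearMap.ker φ) (hMφ : M ≤ LinearMap.ker φ) :
    LinearMap.ker φ = L ⊔ M := by
  have hML : ¬M ≤ L := fun h => hLM (Submodule.eq_of_le_of_finrank_eq h (hM.trans hL.symm)).symm
  have hlt := Submodule.finrank_lt_finrank_of_lt (left_lt_sup.2 hML)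
  have hker := Module.Dual.finrank_ker_add_one_of_ne_zero hφ
  exact (Submodule.eq_of_le_of_finrank_le (sup_le hLφ hMφ) (by omega)).symm

theorem finrank_le_finrank_inf_ker_add_one [FiniteDimensional k V] (U : Submodule k V)
    (φ : V →ₗ[k] k) : finrank k U ≤ finrank k ↥(U ⊓ LinearMap.ker φ) + 1 := by
  have hsup := Submodule.finrank_sup_add_finrank_inf_eq U (LinearMap.ker φ)
  have hle := (U ⊔ LinearMap.ker φ).finrank_le
  have hker := φ.finrank_range_add_finrank_ker
  have hrange := (LinearMap.range φ).finrank_le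
  rw [Module.finrank_self] at hrange
  omega

end LinearAlgebra

section RationalSubspaces

variable {k V : Type*} [Field k] [AddCommGroup V] [Module k V] {τ : k →+* k} {T : V →ₛₗ[τ] V}

/-- `U` is rational for the semilinear operator `T` if it is spanned by fixed vectors of `T`. When
`T` raises coordinates to the power `q²`, this says that `U` is defined over `F_{q²}`. -/
def IsRationalSubspace (T : V →ₛₗ[τ] V) (U : Submodule k V) : Prop :=
  U ≤ Submodule.span k {x | x ∈ U ∧ T x = x}

theorem IsRationalSubspace.le_of_forall_fixed {U W : Submodule k V} (hU : IsRationalSubspace T U)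
    (h : ∀ x ∈ U, T x = x → x ∈ W) : U ≤ W :=
  hU.trans (Submodule.span_le.2 fun x hx => h x hx.1 hx.2)

theorem IsRationalSubspace.exists_fixed_notMem {U W : Submodule k V}
    (hU : IsRationalSubspace T U) (h : ¬U ≤ W) : ∃ x ∈ U, T x = x ∧ x ∉ W := by
  contrapose! h
  exact hU.le_of_forall_fixed h

theorem IsRationalSubspace.inf_ker {U : Submodule k V} (hU : IsRationalSubspace T U)
    {φ : V →ₗ[k] k} (hφ : ∀ x, T x = x → τ (φ x) = φ x) :
    IsRationalSubspace T (U ⊓ LinearMap.ker φ) := by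
  by_cases hle : U ≤ LinearMap.ker φ
  · rwa [inf_eq_left.2 hle]
  obtain ⟨u, huU, hTu, hu⟩ := hU.exists_fixed_notMem hle
  rw [LinearMap.mem_ker] at hu
  -- The projection onto `ker φ` along `u` maps fixed vectors of `U` to fixed vectors.
  let P : V →ₗ[k] V := LinearMap.id - φ.smulRight ((φ u)⁻¹ • u)
  have hP : ∀ w, P w = w - φ w • (φ u)⁻¹ • u := fun w => rfl
  rintro w ⟨hwU, hwφ⟩
  have hPw : P w = w := by rw [hP, LinearMap.mem_ker.1 hwφ, zero_smul, sub_zero]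
  have hmem := Submodule.mem_map_of_mem (f := P) (hU hwU)
  rw [Submodule.map_span, hPw] at hmem
  refine Submodule.span_mono ?_ hmem
  rintro _ ⟨x, ⟨hxU, hTx⟩, rfl⟩
  refine ⟨⟨U.sub_mem hxU (U.smul_mem _ (U.smul_mem _ huU)), ?_⟩, ?_⟩
  · simp [hP, hu]
  · simp only [hP, map_sub, map_smulₛₗ, map_inv₀, hTx, hTu, hφ x hTx, hφ u hTu]

end RationalSubspaces

section TwistedHermitian

variable {k V : Type*} [Field k] [AddCommGroup V] [Module k V] {σ : k →+* k}
  {B : V →ₛₗ[σ] V →ₗ[k] k} {T : V →ₛₗ[σ.comp σ] V}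

theorem apply_eq_zero_of_isotropic {t : k} (ht : σ t ≠ t) {x y : V} (hx : B x x = 0)
    (hy : B y y = 0) (hxy : B (x + y) (x + y) = 0) (hxty : B (x + t • y) (x + t • y) = 0) :
    B x y = 0 := by
  have h₁ : B x y + B y x = 0 := by simpa [hx, hy] using hxy
  have h₂ : t * B x y + σ t * B y x = 0 := by simpa [hx, hy] using hxty
  have h : (t - σ t) * B x y = 0 := by linear_combination h₂ - σ t * h₁
  exact (mul_eq_zero.1 h).resolve_left (sub_ne_zero.2 ht.symm)

theorem apply_eq_zero_of_forall_isotropic (hσ : ∃ t, σ t ≠ t) {L : Submodule k V}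
    (hL : ∀ x ∈ L, B x x = 0) {x y : V} (hx : x ∈ L) (hy : y ∈ L) : B x y = 0 :=
  let ⟨t, ht⟩ := hσ
  apply_eq_zero_of_isotropic ht (hL x hx) (hL y hy) (hL _ (L.add_mem hx hy))
    (hL _ (L.add_mem hx (L.smul_mem t hy)))

/-- Hermitian symmetry of a form `B` that is `σ`-semilinear on the left and linear on the right.
Since `σ` need not be an involution, the symmetry involves the operator `T` playing the role of
`σ²` on vectors. -/
def IsTwistedHermitian (B : V →ₛₗ[σ] V →ₗ[k] k) (T : V →ₛₗ[σ.comp σ] V) : Prop :=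
  ∀ x y, σ (B x y) = B y (T x)

namespace IsTwistedHermitian

theorem map_apply_of_fixed (h : IsTwistedHermitian B T) {x : V} (hx : T x = x) (y : V) :
    σ (B x y) = B y x := by
  rw [h, hx]

theorem map_map_apply_of_fixed (h : IsTwistedHermitian B T) {x : V} (hx : T x = x) (y : V) :
    σ (σ (B x y)) = B x (T y) := by
  rw [h.map_apply_of_fixed hx, h]

theorem apply_eq_zero_comm_of_fixed (h : IsTwistedHermitian B T) {x y : V} (hx : T x = x)
    (hxy : B x y = 0) : B y x = 0 := by
  rw [← h.map_apply_of_fixed hx, hxy, map_zero]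

theorem inf_ker_rational (h : IsTwistedHermitian B T) {U : Submodule k V}
    (hU : IsRationalSubspace T U) {z : V} (hz : T z = z) :
    IsRationalSubspace T (U ⊓ LinearMap.ker (B z)) :=
  hU.inf_ker fun x hx => by rw [RingHom.comp_apply, h.map_map_apply_of_fixed hz, hx]

theorem eq_smul_map_of_ker_le (h : IsTwistedHermitian B T) (hB : B.SeparatingRight) {u v : V}
    (hker : ∀ w, B u w = 0 → B w v = 0) : ∃ l : k, v = l • T u := by
  obtain ⟨l, hl⟩ := exists_forall_eq_mul_of_ker_le_ker (φ := B u) (f := B.flip v) hker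
  refine ⟨l, sub_eq_zero.1 (hB _ fun w => ?_)⟩
  rw [map_sub, map_smul, ← h, smul_eq_mul, ← hl, LinearMap.flip_apply, sub_self]

theorem exists_smul_fixed (h : IsTwistedHermitian B T) (hB : B.SeparatingRight)
    (hT : IsRationalSubspace T ⊤) {v : V} (hv : v ≠ 0) {l : k} (hl : v = l • T v) :
    ∃ a : k, a ≠ 0 ∧ T (a • v) = a • v := by
  have hflip : ¬⊤ ≤ LinearMap.ker (B.flip v) := fun hle => hv (hB v fun w => hle trivial)
  obtain ⟨w, -, hw, hwv⟩ := hT.exists_fixed_notMem hflip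
  have ha : B w v ≠ 0 := hwv
  have hal : B w v = l * σ (σ (B w v)) := by
    conv_lhs => rw [hl]
    rw [map_smul, smul_eq_mul, h.map_map_apply_of_fixed hw]
  have hl0 : l ≠ 0 := left_ne_zero_of_mul (hal ▸ ha)
  refine ⟨(B w v)⁻¹, inv_ne_zero ha, ?_⟩
  calc T ((B w v)⁻¹ • v) = (σ (σ (B w v)))⁻¹ • T v := by simp [map_smulₛₗ]
    _ = (l * σ (σ (B w v)))⁻¹ • l • T v := by
      rw [smul_smul, mul_inv_rev, inv_mul_cancel_right₀ hl0]
    _ = (B w v)⁻¹ • v := by rw [← hal, ← hl]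

theorem exists_smul_fixed_of_lines [FiniteDimensional k V] (hV : finrank k V ≤ 4)
    (h : IsTwistedHermitian B T) (hB : B.Nondegenerate) (hT : IsRationalSubspace T ⊤)
    (hσ : ∃ t, σ t ≠ t) {L M : Submodule k V} (hL : finrank k L = 2) (hM : finrank k M = 2)
    (hLM : L ≠ M) (hBL : ∀ x ∈ L, B x x = 0) (hBM : ∀ x ∈ M, B x x = 0) {v : V} (hv : v ≠ 0)
    (hvL : v ∈ L) (hvM : v ∈ M) : ∃ a : k, a ≠ 0 ∧ T (a • v) = a • v := by
  have hker : LinearMap.ker (B v) = L ⊔ M :=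
    ker_eq_sup_of_ne hV (fun h0 => hv (hB.1 v fun w => by rw [h0, LinearMap.zero_apply])) hL hM hLM
      (fun x hx => apply_eq_zero_of_forall_isotropic hσ hBL hvL hx)
      (fun x hx => apply_eq_zero_of_forall_isotropic hσ hBM hvM hx)
  have hflip : L ⊔ M ≤ LinearMap.ker (B.flip v) :=
    sup_le (fun x hx => apply_eq_zero_of_forall_isotropic hσ hBL hx hvL)
      (fun x hx => apply_eq_zero_of_forall_isotropic hσ hBM hx hvM)
  obtain ⟨l, hl⟩ := h.eq_smul_map_of_ker_le hB.2 fun w hw => hflip (hker ▸ LinearMap.mem_ker.2 hw)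
  exact h.exists_smul_fixed hB.2 hT hv hl

theorem mem_span_singleton_of_ker_le (h : IsTwistedHermitian B T) (hB : B.SeparatingRight)
    {v x : V} (hv : T v = v) (hx : T x = x) (hker : LinearMap.ker (B v) ≤ LinearMap.ker (B x)) :
    x ∈ Submodule.span k {v} := by
  obtain ⟨l, hl⟩ := h.eq_smul_map_of_ker_le hB fun w hw =>
    h.apply_eq_zero_comm_of_fixed hx (hker hw)
  rw [hv] at hl
  exact Submodule.mem_span_singleton.2 ⟨l, hl.symm⟩

theorem exists_fixed_anisotropic (h : IsTwistedHermitian B T) (hB : B.SeparatingRight)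
    (hσ : ∃ t, σ (σ t) = t ∧ σ t ≠ t) {v : V} (hv : T v = v) {U : Submodule k V}
    (hU : IsRationalSubspace T U) (hUv : ¬U ≤ Submodule.span k {v})
    (hrad : ∀ x ∈ U, U ≤ LinearMap.ker (B x) → LinearMap.ker (B v) ≤ LinearMap.ker (B x)) :
    ∃ z ∈ U, T z = z ∧ B z z ≠ 0 := by
  obtain ⟨t, htt, ht⟩ := hσ
  obtain ⟨x, hxU, hx, hxv⟩ := hU.exists_fixed_notMem hUv
  by_contra! hiso
  refine hxv (h.mem_span_singleton_of_ker_le hB hv hx (hrad x hxU ?_))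
  refine hU.le_of_forall_fixed fun y hyU hy => ?_
  refine apply_eq_zero_of_isotropic ht (hiso x hxU hx) (hiso y hyU hy)
    (hiso _ (U.add_mem hxU hyU) ?_) (hiso _ (U.add_mem hxU (U.smul_mem t hyU)) ?_)
  · rw [map_add, hx, hy]
  · rw [map_add, map_smulₛₗ, RingHom.comp_apply, htt, hx, hy]

end IsTwistedHermitian

/-- An isotropic vector `v ≠ 0` together with mutually orthogonal anisotropic vectors `x` and `y`
that are orthogonal to `v`. In dimension four they form an orthogonal basis of the tangent space at
`v` of the surface `B z z = 0`. Orthogonality is required on both sides because `B` need not be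
reflexive. -/
structure IsTangentFrame (B : V →ₛₗ[σ] V →ₗ[k] k) (v x y : V) : Prop where
  ne_zero : v ≠ 0
  apply_vv : B v v = 0
  apply_vx : B v x = 0
  apply_vy : B v y = 0
  apply_xv : B x v = 0
  apply_yv : B y v = 0
  apply_xy : B x y = 0
  apply_yx : B y x = 0
  apply_xx_ne : B x x ≠ 0
  apply_yy_ne : B y y ≠ 0

theorem IsTwistedHermitian.exists_isTangentFrame [FiniteDimensional k V] (hV : 4 ≤ finrank k V)
    (h : IsTwistedHermitian B T) (hB : B.SeparatingRight) (hT : IsRationalSubspace T ⊤)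
    (hσ : ∃ t, σ (σ t) = t ∧ σ t ≠ t) {v : V} (hv0 : v ≠ 0) (hv : T v = v) (hvv : B v v = 0) :
    ∃ x y, T x = x ∧ T y = y ∧ IsTangentFrame B v x y := by
  have not_le_span (U : Submodule k V) (hU : 2 ≤ finrank k U) : ¬U ≤ Submodule.span k {v} := by
    intro hle
    have hfinrank := Submodule.finrank_mono hle
    rw [finrank_span_singleton hv0] at hfinrank
    omega
  have hK : IsRationalSubspace T (LinearMap.ker (B v)) := by
    simpa using h.inf_ker_rational hT hv
  have hKdim := finrank_le_finrank_inf_ker_add_one ⊤ (B v)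
  rw [finrank_top, top_inf_eq] at hKdim
  obtain ⟨y, hyK, hy, hyy⟩ := h.exists_fixed_anisotropic hB hσ hv hK
    (not_le_span _ (by omega)) fun x _ hle => hle
  have hUdim := finrank_le_finrank_inf_ker_add_one (LinearMap.ker (B v)) (B y)
  obtain ⟨x, ⟨hxK, hxy⟩, hx, hxx⟩ := h.exists_fixed_anisotropic hB hσ hv
    (h.inf_ker_rational hK hy) (not_le_span _ (by omega)) fun x ⟨_, hyx⟩ hle w hw => by
      have hxy : B x y = 0 := h.apply_eq_zero_comm_of_fixed hy hyx
      have hproj : B x (w - (B y w / B y y) • y) = 0 := hle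
        ⟨sub_mem hw (Submodule.smul_mem _ _ hyK), by simp [hyy]⟩
      simpa [hxy] using hproj
  exact ⟨x, y, hx, hy, hv0, hvv, hxK, hyK, h.apply_eq_zero_comm_of_fixed hv hxK,
    h.apply_eq_zero_comm_of_fixed hv hyK, h.apply_eq_zero_comm_of_fixed hy hxy, hxy, hxx, hyy⟩

/-- The line of the tangent plane at `v` that joins `v` to the point `x + t • y`. -/
def tangentLine (v x y : V) (t : k) : Submodule k V :=
  Submodule.span k {v, x + t • y}

namespace IsTangentFrame

variable {v x y : V}

theorem finrank_tangentLine (hf : IsTangentFrame B v x y) (t : k) :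
    finrank k (tangentLine v x y t) = 2 := by
  have hind : LinearIndependent k ![v, x + t • y] := by
    refine LinearIndependent.pair_iff.2 fun a b hab => ?_
    have hb : b * B x x = 0 := by
      simpa [hf.apply_xv, hf.apply_xy] using congrArg (B x) hab
    obtain rfl := (mul_eq_zero.1 hb).resolve_right hf.apply_xx_ne
    have ha : a • v = 0 := by simpa using hab
    exact ⟨(smul_eq_zero.1 ha).resolve_right hf.ne_zero, rfl⟩
  rw [tangentLine, ← Matrix.range_cons_cons_empty v (x + t • y) ![], finrank_span_eq_card hind,
    Fintype.card_fin]

theorem tangentLine_injective (hf : IsTangentFrame B v x y) :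
    Function.Injective (tangentLine (k := k) v x y) := by
  intro s t hst
  have hmem : x + s • y ∈ tangentLine v x y t := hst ▸ Submodule.subset_span (by simp)
  obtain ⟨a, b, hab⟩ := Submodule.mem_span_pair.1 hmem
  have hx : b * B x x = B x x := by
    simpa [hf.apply_xv, hf.apply_xy] using congrArg (B x) hab
  have hy : b * (t * B y y) = s * B y y := by
    simpa [hf.apply_yv, hf.apply_yx] using congrArg (B y) hab
  obtain rfl := (mul_eq_right₀ hf.apply_xx_ne).1 hx
  rw [one_mul] at hy
  exact (mul_right_cancel₀ hf.apply_yy_ne hy).symm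

theorem isotropic_of_mem_tangentLine (hf : IsTangentFrame B v x y) {t : k}
    (ht : σ t * t = -(B x x / B y y)) {z : V} (hz : z ∈ tangentLine v x y t) : B z z = 0 := by
  obtain ⟨a, b, rfl⟩ := Submodule.mem_span_pair.1 hz
  have hform : B x x + σ t * t * B y y = 0 := by
    rw [ht, neg_mul, div_mul_cancel₀ _ hf.apply_yy_ne, add_neg_cancel]
  simp only [map_add, map_smulₛₗ, LinearMap.add_apply, LinearMap.smul_apply, smul_eq_mul,
    hf.apply_vv, hf.apply_vx, hf.apply_vy, hf.apply_xv, hf.apply_yv, hf.apply_xy, hf.apply_yx]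
  linear_combination σ b * b * hform

end IsTangentFrame

theorem IsTwistedHermitian.exists_isotropic_lines [FiniteDimensional k V] (hV : 4 ≤ finrank k V)
    (h : IsTwistedHermitian B T) (hB : B.SeparatingRight) (hT : IsRationalSubspace T ⊤)
    (hσ : ∃ t, σ (σ t) = t ∧ σ t ≠ t) {n : ℕ}
    (hn : ∀ c, c ≠ 0 → σ c = c → {t : k | σ t * t = c}.ncard = n)
    {v : V} (hv0 : v ≠ 0) (hv : T v = v) (hvv : B v v = 0) :
    ∃ S : Set (Submodule k V), S.ncard = n ∧
      ∀ L ∈ S, finrank k L = 2 ∧ (∀ z ∈ L, B z z = 0) ∧ v ∈ L := by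
  obtain ⟨x, y, hx, hy, hf⟩ := h.exists_isTangentFrame hV hB hT hσ hv0 hv hvv
  refine ⟨tangentLine v x y '' {t | σ t * t = -(B x x / B y y)}, ?_, ?_⟩
  · rw [Set.ncard_image_of_injective _ hf.tangentLine_injective]
    refine hn _ (neg_ne_zero.2 (div_ne_zero hf.apply_xx_ne hf.apply_yy_ne)) ?_
    rw [map_neg, map_div₀, h.map_apply_of_fixed hx, h.map_apply_of_fixed hy]
  · rintro _ ⟨t, ht, rfl⟩
    exact ⟨hf.finrank_tangentLine t, fun z hz => hf.isotropic_of_mem_tangentLine ht hz,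
      Submodule.subset_span (Set.mem_insert _ _)⟩

end TwistedHermitian

section Coordinates

variable {k ι : Type*} [Field k]

/-- The `τ`-semilinear map applying the ring homomorphism `τ` to every coordinate. -/
def coordinatewise (ι : Type*) (τ : k →+* k) : (ι → k) →ₛₗ[τ] (ι → k) where
  toFun x i := τ (x i)
  map_add' x y := funext fun i => map_add τ (x i) (y i)
  map_smul' a x := funext fun i => map_mul τ a (x i)

theorem coordinatewise_injective (τ : k →+* k) : Function.Injective (coordinatewise ι τ) :=
  fun _ _ hxy => funext fun i => τ.injective (congrFun hxy i)

theorem isRationalSubspace_coordinatewise_top [Finite ι] (τ : k →+* k) :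
    IsRationalSubspace (coordinatewise ι τ) ⊤ := by
  classical
  have hsingle : ∀ i, coordinatewise ι τ (Pi.single i 1) = Pi.single i 1 := fun i =>
    funext fun j => by simp [coordinatewise, Pi.single_apply, apply_ite τ]
  rw [IsRationalSubspace, ← (Pi.basisFun k ι).span_eq]
  refine Submodule.span_mono ?_
  rintro _ ⟨i, rfl⟩
  exact ⟨by simp [(Pi.basisFun k ι).span_eq], by rw [Pi.basisFun_apply, hsingle]⟩

variable [Fintype ι] [DecidableEq ι] {σ : k →+* k}

/-- The form `∑ A i j * σ (x i) * y j`. When `σ` is the `q`-power map, its value at `x = y` is the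
Frobenius form with matrix `A`. -/
def twistedForm (σ : k →+* k) (A : Matrix ι ι k) : (ι → k) →ₛₗ[σ] (ι → k) →ₗ[k] k :=
  Matrix.toLinearMapₛₗ₂' k σ (RingHom.id k) A

theorem twistedForm_apply (A : Matrix ι ι k) (x y : ι → k) :
    twistedForm σ A x y = ∑ i, ∑ j, A i j * σ (x i) * y j := by
  rw [twistedForm, Matrix.toLinearMapₛₗ₂'_apply]
  refine Finset.sum_congr rfl fun i _ => Finset.sum_congr rfl fun j _ => ?_
  simp only [smul_eq_mul, RingHom.id_apply]
  ring

theorem isTwistedHermitian_twistedForm {A : Matrix ι ι k} (hA : (A.map σ).transpose = A) :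
    IsTwistedHermitian (twistedForm σ A) (coordinatewise ι (σ.comp σ)) := by
  intro x y
  have hentry : ∀ i j, σ (A i j) = A j i := fun i j => congrFun (congrFun hA j) i
  simp only [twistedForm_apply, map_sum, map_mul, hentry]
  rw [Finset.sum_comm]
  refine Finset.sum_congr rfl fun i _ => Finset.sum_congr rfl fun j _ => ?_
  simp only [coordinatewise, LinearMap.coe_mk, AddHom.coe_mk, RingHom.comp_apply]
  ring

theorem separatingRight_twistedForm {A : Matrix ι ι k} (hA : IsUnit A) :
    (twistedForm σ A).SeparatingRight := by
  intro y hy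
  refine Matrix.mulVec_injective_of_isUnit hA (funext fun i => ?_)
  simpa [twistedForm_apply, Pi.single_apply, apply_ite σ, Matrix.mulVec, dotProduct] using
    hy (Pi.single i 1)

theorem nondegenerate_twistedForm {A : Matrix ι ι k} (hA : IsUnit A)
    (hherm : (A.map σ).transpose = A) : (twistedForm σ A).Nondegenerate := by
  have hright := separatingRight_twistedForm (σ := σ) hA
  refine ⟨fun x hx => coordinatewise_injective (σ.comp σ) ?_, hright⟩
  rw [map_zero]
  refine hright _ fun y => ?_
  rw [← isTwistedHermitian_twistedForm hherm, hx, map_zero]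

end Coordinates

section StarPoints

variable {k : Type*} [Field k] {q : ℕ} {σ : k →+* k} {A : Matrix (Fin 4) (Fin 4) k}
  {c : Submodule k (Fin 4 → k)}

theorem mem_extremalCone_iff (hσ : ∀ a, σ a = a ^ q) {x : Fin 4 → k} :
    x ∈ extremalCone k q A ↔ twistedForm σ A x x = 0 := by
  simp only [extremalCone, frobForm, Set.mem_ofPred_eq, twistedForm_apply, hσ]

theorem coordinatewise_comp_self_eq_iff {ι : Type*} (hσ : ∀ a, σ a = a ^ q) {x : ι → k} :
    coordinatewise ι (σ.comp σ) x = x ↔ ∀ i, x i ^ q ^ 2 = x i := by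
  simp only [funext_iff, coordinatewise, LinearMap.coe_mk, AddHom.coe_mk, RingHom.comp_apply, hσ,
    ← pow_mul, sq q]

theorem span_singleton_eq_of_isPoint (hc : IsPoint c) {v : Fin 4 → k} (hvc : v ∈ c)
    (hv : v ≠ 0) : Submodule.span k {v} = c :=
  Submodule.eq_of_le_of_finrank_eq ((Submodule.span_singleton_le_iff_mem v c).2 hvc)
    ((finrank_span_singleton hv).trans hc.symm)

theorem IsStarPoint.exists_lines {X : Set (Fin 4 → k)} (hq : q ≠ 0) (hc : IsStarPoint q X c) :
    ∃ L M, L ≠ M ∧ (IsLineOn X L ∧ c ≤ L) ∧ IsLineOn X M ∧ c ≤ M := by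
  obtain ⟨S, -, hcard, hS⟩ := hc
  have hfin : S.Finite := Set.finite_of_ncard_ne_zero (by omega)
  obtain ⟨L, M, hL, hM, hLM⟩ := (Set.one_lt_ncard_iff hfin).1 (by omega)
  exact ⟨L, M, hLM, hS L hL, hS M hM⟩

theorem IsStarPoint.exists_rational (hσ : ∀ a, σ a = a ^ q) (hσ1 : ∃ t, σ t ≠ t) (hA : IsUnit A)
    (hHerm : (A.map σ).transpose = A) (hc : IsStarPoint q (extremalCone k q A) c) :
    ∃ v ∈ c, v ≠ 0 ∧ ∀ i, v i ^ q ^ 2 = v i := by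
  have hq : q ≠ 0 := by
    rintro rfl
    simpa using hσ 0
  have ⟨_, hpoint, _⟩ := hc
  obtain ⟨L, M, hLM, ⟨⟨hL, hLX⟩, hcL⟩, ⟨hM, hMX⟩, hcM⟩ := hc.exists_lines hq
  obtain ⟨v, hvc, hv⟩ := c.exists_mem_ne_zero_of_ne_bot
    (Submodule.one_le_finrank_iff.1 hpoint.ge)
  obtain ⟨a, ha, hav⟩ := (isTwistedHermitian_twistedForm hHerm).exists_smul_fixed_of_lines
    (finrank_fin_fun k).le (nondegenerate_twistedForm hA hHerm)
    (isRationalSubspace_coordinatewise_top _) hσ1 hL hM hLM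
    (fun x hx => (mem_extremalCone_iff hσ).1 (hLX hx))
    (fun x hx => (mem_extremalCone_iff hσ).1 (hMX hx)) hv (hcL hvc) (hcM hvc)
  exact ⟨a • v, c.smul_mem a hvc, smul_ne_zero ha hv, (coordinatewise_comp_self_eq_iff hσ).1 hav⟩

theorem isStarPoint_of_rational (hσ : ∀ a, σ a = a ^ q) (hσ2 : ∃ t, σ (σ t) = t ∧ σ t ≠ t)
    (hcount : ∀ a : k, a ≠ 0 → a ^ q = a → {t : k | t ^ (q + 1) = a}.ncard = q + 1)
    (hA : IsUnit A) (hHerm : (A.map σ).transpose = A) (hc : IsPoint c)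
    (hcX : (c : Set (Fin 4 → k)) ⊆ extremalCone k q A) {v : Fin 4 → k} (hvc : v ∈ c)
    (hv : v ≠ 0) (hrat : ∀ i, v i ^ q ^ 2 = v i) : IsStarPoint q (extremalCone k q A) c := by
  obtain ⟨S, hcard, hS⟩ := (isTwistedHermitian_twistedForm hHerm).exists_isotropic_lines
    (finrank_fin_fun k).ge (separatingRight_twistedForm hA)
    (isRationalSubspace_coordinatewise_top _) hσ2 (n := q + 1)
    (by simpa only [hσ, pow_succ] using hcount) hv ((coordinatewise_comp_self_eq_iff hσ).2 hrat)
    ((mem_extremalCone_iff hσ).1 (hcX hvc))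
  refine ⟨S, hc, hcard, fun L hL => ?_⟩
  obtain ⟨hdim, hiso, hvL⟩ := hS L hL
  refine ⟨⟨hdim, fun z hz => (mem_extremalCone_iff hσ).2 (hiso z hz)⟩, ?_⟩
  rwa [← span_singleton_eq_of_isPoint hc hvc hv, Submodule.span_singleton_le_iff_mem]

end StarPoints

theorem hermitian_star_points_eq_rational_points_general {k : Type*} [Field k]
    (p e q : ℕ) (hp : p.Prime) (hchar : CharP k p) (he : 1 ≤ e) (hq : q = p ^ e)
    (hsplits : (Polynomial.X ^ q ^ 2 - Polynomial.X : Polynomial k).Splits)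
    (A : Matrix (Fin 4) (Fin 4) k) (hA : IsUnit A)
    (hHerm : Matrix.transpose (A.map fun a => a ^ q) = A)
    (c : Submodule k (Fin 4 → k)) (hc : IsPoint c)
    (hcX : (c : Set (Fin 4 → k)) ⊆ extremalCone k q A) :
    IsStarPoint q (extremalCone k q A) c ↔
      ∃ v ∈ c, v ≠ 0 ∧ ∀ i, v i ^ q ^ 2 = v i := by
  have : Fact p.Prime := ⟨hp⟩
  have hq1 : 1 < q := hq ▸ one_lt_pow₀ hp.one_lt (by omega)
  have hqk : (q : k) = 0 := by
    rw [hq, Nat.cast_pow, CharP.cast_eq_zero, zero_pow (by omega)]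
  let σ : k →+* k := iterateFrobenius k p e
  have hσ : ∀ a, σ a = a ^ q := fun a => by rw [hq]; exact iterateFrobenius_def p e a
  obtain ⟨t, htt, ht⟩ := exists_pow_sq_eq_self_and_pow_ne_self hq1 hqk hsplits
  have hσ1 : σ t ≠ t := by rwa [hσ]
  have hσ2 : σ (σ t) = t := by rwa [hσ, hσ, ← pow_mul, ← sq]
  have hHerm' : (A.map σ).transpose = A := by simpa only [← hσ] using hHerm
  constructor
  · exact IsStarPoint.exists_rational hσ ⟨t, hσ1⟩ hA hHerm'
  · rintro ⟨v, hvc, hv, hrat⟩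
    exact isStarPoint_of_rational hσ ⟨t, hσ2, hσ1⟩
      (fun _ => ncard_setOf_pow_add_one_eq hq1 hqk hsplits) hA hHerm' hc hcX hvc hv hrat

/-- Let `X` be the smooth extremal surface of degree `q+1`
cut out by a full-rank Frobenius form whose matrix `A` is Hermitian, i.e.
`(A^{[q]})ᵀ = A` (so every entry of `A` lies in `F_{q²}`).  Then a point of
`X` is a star point of `X` iff it is an `F_{q²}`-point, i.e. it admits a
homogeneous coordinate representative all of whose coordinates lie in
`F_{q²} = {x : k | x^{q²} = x}`. -/
theorem hermitian_star_points_eq_rational_points {k : Type*} [Field k] [IsAlgClosed k]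
    (p e q : ℕ) (hp : p.Prime) (hchar : CharP k p) (he : 1 ≤ e) (hq : q = p ^ e)
    (A : Matrix (Fin 4) (Fin 4) k) (hA : IsUnit A)
    (hHerm : Matrix.transpose (A.map fun a => a ^ q) = A)
    (c : Submodule k (Fin 4 → k)) (hc : IsPoint c)
    (hcX : (c : Set (Fin 4 → k)) ⊆ extremalCone k q A) :
    IsStarPoint q (extremalCone k q A) c ↔
      ∃ v ∈ c, v ≠ 0 ∧ ∀ i, v i ^ q ^ 2 = v i :=
  hermitian_star_points_eq_rational_points_general p e q hp hchar he hq
    (IsAlgClosed.splits _) A hA hHerm c hc hcX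
end
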